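/- For every real number N > 0 there is an integer c > 1 with the following property. Let δ > 0 and κ > 0, let G be a group acting by isometries and (κ,N)-acylindrically on a δ-hyperbolic geodesic metric space X, and let U ⊆ G be a finite nonempty symmetric subset. Then at least one of the following holds: (i) L(U) ≤ 10⁴·max{κ,δ}; (ii) the subgroup generated by U is virtually cyclic and contains a loxodromic element; (iii) there exist p ∈ X and a subset S ⊆ U^c that is 200δ-reduced at p with |S| ≥ max{2, |U|/c}, and moreover ω(U) ≥ (1/(2c))·log|U|. -/

import Mathlib

/-! Assume that the energy of `U` is large and let `p` almost minimise it, `L` being the maximal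
displacement of `p` under `U`. Hyperbolicity and minimality produce an element `g` of `U ∪ U²`
which is loxodromic with the orbit `n ↦ gⁿp` a quasi-geodesic of speed comparable to `L`
(`HypAct.exists_lox`).

Put `h = g ^ N!`, and let `elem h` be the group of elements conjugating `h` to `h` or `h⁻¹`. If an
element `f` with small displacement carries the axis of `g` along itself for a long time, then
acylindricity and the pigeonhole principle show that `f` lies in `elem h`. Hence the axes of `g`
and of its translates by short elements outside `elem h` have overlap bounded by a constant
depending only on `N`, times `L` (`HypAct.overlap`).

If `U` is contained in `elem h`, then it generates a virtually cyclic group, because `elem h` is a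
finite union of cosets of `⟨h⟩` (`HypAct.virtuallyCyclic`). Otherwise pick `b ∈ U` outside `elem h`,
let `γ` be a large power of `h`, and consider the word `w = γ b γ² b⁻¹ γ²`. The exponents make `w`
asymmetric, so that for `u, u'` in `U` the words `u w u⁻¹` and `(u' w u'⁻¹)^{±1}` can follow each
other closely only if `u⁻¹u'` commutes with `h` and with `bhb⁻¹` (`HypAct.reduced_conj`). The group
`C` of such elements is torsion and commutes with `h`, hence has at most `N` elements
(`HypAct.torsion_card`, `HypAct.conj_torsion`). So the conjugates of `w` by representatives of `U`
modulo `C` form a reduced set `S` with `|U| ≤ N|S|`, contained in a power of `U` depending only on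
`N` (`HypAct.exists_reduced`).

By the local-to-global principle for broken geodesics (`HypAct.chain_pos`), a reduced set is free
(`ReducedAt.ncard_pow`), which bounds the growth rate of `U` from below. -/

open Pointwise Filter

noncomputable section

universe u v

/-- The Gromov product `(x,y)_t`. -/
def gromov {X : Type*} [MetricSpace X] (x y t : X) : ℝ :=
  (dist x t + dist y t - dist x y) / 2

/-- `X` is `δ`-hyperbolic (four point inequality). -/
def IsDeltaHyperbolic (X : Type*) [MetricSpace X] (δ : ℝ) : Prop :=
  ∀ x y z t : X, min (gromov x y t) (gromov y z t) - δ ≤ gromov x z t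

/-- `X` is a geodesic metric space: any two points are joined by an isometric
embedding of a closed real interval. -/
def IsGeodesicSpace (X : Type*) [MetricSpace X] : Prop :=
  ∀ x y : X, ∃ f : ℝ → X, f 0 = x ∧ f (dist x y) = y ∧
    ∀ s ∈ Set.Icc (0 : ℝ) (dist x y), ∀ t ∈ Set.Icc (0 : ℝ) (dist x y),
      dist (f s) (f t) = |s - t|

/-- The action of `G` on `X` is by isometries. -/
def IsometricAction (G X : Type*) [Group G] [MetricSpace X] [MulAction G X] : Prop :=
  ∀ g : G, Isometry fun x : X => g • x

/-- The action of `G` on `X` is `(κ,N)`-acylindrical (relative to the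
hyperbolicity constant `δ`). -/
def AcylindricalAction (G X : Type*) [Group G] [MetricSpace X] [MulAction G X]
    (δ κ N : ℝ) : Prop :=
  ∀ x y : X, κ ≤ dist x y →
    {g : G | dist (g • x) x ≤ 100 * δ ∧ dist (g • y) y ≤ 100 * δ}.Finite ∧
    ({g : G | dist (g • x) x ≤ 100 * δ ∧ dist (g • y) y ≤ 100 * δ}.ncard : ℝ) ≤ N

/-- `L(U,x)`, the `ℓ^∞`-energy of `U` at `x`. -/
def energyAt {G X : Type*} [Group G] [MetricSpace X] [MulAction G X]
    (U : Set G) (x : X) : ℝ :=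
  sSup ((fun u : G => dist (u • x) x) '' U)

/-- `L(U)`, the `ℓ^∞`-energy of `U`. -/
def energy {G : Type*} (X : Type*) [Group G] [MetricSpace X] [MulAction G X]
    (U : Set G) : ℝ :=
  sInf (Set.range fun x : X => energyAt U x)

/-- The stable translation length `‖g‖^∞`, computed at the point `x` (for an
isometric action, by Fekete's subadditive lemma this infimum equals the limit of
`d(gⁿx,x)/n` and is independent of `x`). -/
def stableLength {G X : Type*} [Group G] [MetricSpace X] [MulAction G X]
    (g : G) (x : X) : ℝ :=
  ⨅ n : ℕ+, dist ((g ^ (n : ℕ)) • x) x / ((n : ℕ) : ℝ)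

/-- `g` is loxodromic for the action on `X`. -/
def IsLoxodromic {G : Type*} (X : Type*) [Group G] [MetricSpace X] [MulAction G X]
    (g : G) : Prop :=
  ∀ x : X, 0 < stableLength g x

/-- The translation length `‖g‖`. -/
def translationLength {G : Type*} (X : Type*) [Group G] [MetricSpace X] [MulAction G X]
    (g : G) : ℝ :=
  sInf (Set.range fun x : X => dist (g • x) x)

/-- The axis of `g`. -/
def axisOf {G X : Type*} [Group G] [MetricSpace X] [MulAction G X]
    (δ : ℝ) (g : G) : Set X :=
  {x : X | dist (g • x) x ≤ translationLength X g + 8 * δ}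

/-- The exponential growth rate `ω(U) = limsup (1/n) log |Uⁿ|`. -/
def growthRate {G : Type*} [Group G] (U : Set G) : ℝ :=
  limsup (fun n : ℕ => Real.log ((U ^ n).ncard : ℝ) / (n : ℝ)) atTop

/-- `S` is `α`-reduced at `p`. -/
def ReducedAt {G X : Type*} [Group G] [MetricSpace X] [MulAction G X]
    (δ α : ℝ) (S : Set G) (p : X) : Prop :=
  S ∩ S⁻¹ = ∅ ∧
  ∀ u₁ ∈ S ∪ S⁻¹, ∀ u₂ ∈ S ∪ S⁻¹, u₁ ≠ u₂ →
    gromov (u₁ • p) (u₂ • p) p <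
      min (dist (u₁ • p) p) (dist (u₂ • p) p) / 2 - α - 50 * δ

/-- A group is virtually cyclic if it has a cyclic subgroup of finite index. -/
def VirtuallyCyclic (H : Type*) [Group H] : Prop :=
  ∃ K : Subgroup H, IsCyclic K ∧ K.FiniteIndex

/-- A group is virtually nilpotent if it has a nilpotent subgroup of finite index. -/
def VirtuallyNilpotent (H : Type*) [Group H] : Prop :=
  ∃ K : Subgroup H, Group.IsNilpotent K ∧ K.FiniteIndex

/-- An `L`-local `(1,δ)`-quasi-geodesic line. -/
def IsLocalQuasiGeodesic {X : Type*} [MetricSpace X] (L δ : ℝ) (γ : ℝ → X) : Prop :=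
  ∀ s t : ℝ, |s - t| ≤ L → dist (γ s) (γ t) ≤ |s - t| ∧ |s - t| ≤ dist (γ s) (γ t) + δ

/-- `Y` is `σ`-quasi-convex. -/
def SigmaQuasiConvex {X : Type*} [MetricSpace X] (σ : ℝ) (Y : Set X) : Prop :=
  ∀ x : X, ∀ y ∈ Y, ∀ y' ∈ Y, Metric.infDist x Y ≤ gromov y y' x + σ

/-- `y` is a `δ`-projection of `x` on `Y`. -/
def IsDProj {X : Type*} [MetricSpace X] (δ : ℝ) (Y : Set X) (x y : X) : Prop :=
  y ∈ Y ∧ dist x y ≤ Metric.infDist x Y + δ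

/-- `l` is a reduced word over `U ∪ U⁻¹`. -/
def IsWordOver {G : Type*} [Group G] (U : Set G) (l : List G) : Prop :=
  (∀ a ∈ l, a ∈ U ∪ U⁻¹) ∧ l.Chain' fun a b => b ≠ a⁻¹

/-- `l` is a `τ`-shortening word over `Y` (relative to `U` and `p`). -/
def IsShorteningWord {G X : Type*} [Group G] [MetricSpace X] [MulAction G X]
    (δ τ : ℝ) (U : Set G) (p : X) (Y : Set X) (l : List G) : Prop :=
  l ≠ [] ∧ IsWordOver U l ∧
  ∃ y₀ y₁ : X, IsDProj δ Y p y₀ ∧ IsDProj δ Y (l.prod • p) y₁ ∧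
    τ < dist y₀ y₁ ∧
    (∀ a ∈ l.head?, dist p y₀ ≤ dist (a • p) p / 2 - 200 * δ) ∧
    (∀ a ∈ l.getLast?, dist (l.prod • p) y₁ ≤ dist (a • p) p / 2 - 200 * δ)

/-- `l` is a `τ`-shortening-free word relative to the family `Ys`. -/
def ShorteningFreeWord {G X : Type*} [Group G] [MetricSpace X] [MulAction G X]
    (δ τ : ℝ) (U : Set G) (p : X) (Ys : Set (Set X)) (l : List G) : Prop :=
  IsWordOver U l ∧
  ∀ Y ∈ Ys, ∀ l₀ l₁ l₂ : List G, l = l₀ ++ l₁ ++ l₂ → ¬ IsShorteningWord δ τ U p Y l₁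

/-- The word length of an element of a free group. -/
def fgNorm {α : Type*} (w : FreeGroup α) : ℕ :=
  letI := Classical.decEq α
  w.toWord.length

/-- `w` is a prefix of `r` in the free group. -/
def FGPrefix {α : Type*} (w r : FreeGroup α) : Prop :=
  fgNorm r = fgNorm w + fgNorm (w⁻¹ * r)

/-- `r'` is a cyclic permutation of `r`. -/
def IsCyclicPerm {α : Type*} (r r' : FreeGroup α) : Prop :=
  ∃ w v : FreeGroup α, r = w * v ∧ fgNorm r = fgNorm w + fgNorm v ∧
    r' = v * w ∧ fgNorm r' = fgNorm v + fgNorm w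

/-- `q` is a piece of the set of relators `R`. -/
def IsPiece {α : Type*} (R : Set (FreeGroup α)) (q : FreeGroup α) : Prop :=
  q ≠ 1 ∧ ∃ r₁ ∈ R, ∃ r₂ ∈ R, r₁ ≠ r₂ ∧ FGPrefix q r₁ ∧ FGPrefix q r₂

/-- `ξ`-uniform uniform exponential growth: every finitely generated subgroup is
either virtually nilpotent or has `ξ`-uniform exponential growth. -/
def UUEG (ξ : ℝ) (Q : Type*) [Group Q] : Prop :=
  ∀ H : Subgroup Q, H.FG →
    (VirtuallyNilpotent H ∨
      ∀ U : Set H, U.Finite → U⁻¹ = U → Subgroup.closure U = ⊤ → ξ < growthRate U)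

/-! ### The length function of an orbit -/

/-- The standing geometric assumptions: `G` acts by isometries on the geodesic
`δ`-hyperbolic space `X`, with `δ > 0`. -/
structure HypAct (G X : Type*) [Group G] [MetricSpace X] [MulAction G X] (δ : ℝ) : Prop where
  pos : 0 < δ
  hyp : IsDeltaHyperbolic X δ
  geod : IsGeodesicSpace X
  isom : IsometricAction G X

/-- The displacement `|g| = d(gp,p)` of the base point `p`. -/
def len {G X : Type*} [Group G] [MetricSpace X] [MulAction G X] (p : X) (g : G) : ℝ :=
  dist (g • p) p

/-- The Gromov product `(ap,bp)_p`, written through the length function `len p`. -/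
def gpr {G X : Type*} [Group G] [MetricSpace X] [MulAction G X] (p : X) (a b : G) : ℝ :=
  (len p a + len p b - len p (a⁻¹ * b)) / 2

section Length

variable {G X : Type*} [Group G] [MetricSpace X] [MulAction G X] {δ : ℝ}

theorem HypAct.dist_smul (H : HypAct G X δ) (g : G) (x y : X) :
    dist (g • x) (g • y) = dist x y := (H.isom g).dist_eq x y

theorem HypAct.dist_smul_left (H : HypAct G X δ) (g : G) (x y : X) :
    dist (g • x) y = dist x (g⁻¹ • y) := by
  rw [← H.dist_smul g x (g⁻¹ • y), smul_inv_smul]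

/-- The four point condition on the three sums of opposite distances. -/
theorem HypAct.four (H : HypAct G X δ) (x y z t : X) :
    dist x z + dist y t ≤ dist x y + dist z t + 2 * δ ∨
      dist x z + dist y t ≤ dist y z + dist x t + 2 * δ := by
  have h := H.hyp x y z t
  simp only [gromov] at h
  rcases min_cases ((dist x t + dist y t - dist x y) / 2)
    ((dist y t + dist z t - dist y z) / 2) with h1 | h1
  · rw [h1.1] at h; left; linarith
  · rw [h1.1] at h; right; linarith

theorem len_nonneg (p : X) (g : G) : 0 ≤ len p g := dist_nonneg

theorem len_one (p : X) : len p (1 : G) = 0 := by simp [len]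

theorem HypAct.len_inv (H : HypAct G X δ) (p : X) (g : G) : len p g⁻¹ = len p g := by
  rw [len, len, H.dist_smul_left, inv_inv, dist_comm]

theorem HypAct.dist_eq_len (H : HypAct G X δ) (p : X) (a b : G) :
    dist (a • p) (b • p) = len p (a⁻¹ * b) := by
  rw [len, mul_smul, H.dist_smul_left a⁻¹, inv_inv, dist_comm]

theorem HypAct.len_mul_le (H : HypAct G X δ) (p : X) (a b : G) :
    len p (a * b) ≤ len p a + len p b := by
  have h1 : len p (a * b) = dist (a⁻¹ • p) (b • p) := by rw [H.dist_eq_len, inv_inv]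
  have h2 := dist_triangle (a⁻¹ • p) p (b • p)
  have h3 : dist (a⁻¹ • p) p = len p a := H.len_inv p a
  have h4 : dist p (b • p) = len p b := by rw [dist_comm]; rfl
  linarith

theorem HypAct.gromov_eq (H : HypAct G X δ) (p : X) (a b : G) :
    gromov (a • p) (b • p) p = gpr p a b := by
  rw [gromov, gpr, H.dist_eq_len]; rfl

theorem HypAct.gpr_comm (H : HypAct G X δ) (p : X) (a b : G) : gpr p a b = gpr p b a := by
  have : len p (a⁻¹ * b) = len p (b⁻¹ * a) := by rw [← H.len_inv]; simp
  rw [gpr, gpr, this]; ring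

theorem HypAct.len_hyp (H : HypAct G X δ) (p : X) (a b c : G) :
    gpr p a b ≤ gpr p a c + δ ∨ gpr p b c ≤ gpr p a c + δ := by
  have h := H.hyp (a • p) (b • p) (c • p) p
  simp only [H.gromov_eq] at h
  rcases min_cases (gpr p a b) (gpr p b c) with h1 | h1
  · left; linarith
  · right; linarith

theorem HypAct.len_mul (H : HypAct G X δ) (p : X) (a b : G) :
    len p (a * b) = len p a + len p b - 2 * gpr p a⁻¹ b := by
  rw [gpr, inv_inv, H.len_inv]; ring

theorem HypAct.gpr_mul_left (H : HypAct G X δ) (p : X) (b r : G) :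
    gpr p (b * r) b = len p b - gpr p b⁻¹ r := by
  have : len p ((b * r)⁻¹ * b) = len p r := by
    rw [mul_inv_rev, inv_mul_cancel_right, H.len_inv]
  rw [gpr, gpr, this, inv_inv, H.len_inv]; ring

theorem HypAct.gpr_le_left (H : HypAct G X δ) (p : X) (a b : G) : gpr p a b ≤ len p a := by
  have h := H.len_mul_le p a (a⁻¹ * b)
  rw [mul_inv_cancel_left] at h
  rw [gpr]; linarith

theorem HypAct.gpr_le_right (H : HypAct G X δ) (p : X) (a b : G) : gpr p a b ≤ len p b := by
  rw [H.gpr_comm]; exact H.gpr_le_left p b a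

/-- Right multiplication by `z` changes a Gromov product by at most `|z|`. -/
theorem HypAct.gpr_mul_right_le (H : HypAct G X δ) (p : X) (a b z : G) :
    gpr p (a * z) b ≤ gpr p a b + len p z := by
  have h1 := H.len_mul_le p a z
  have h2 := H.len_mul_le p z (z⁻¹ * a⁻¹ * b)
  have e : z * (z⁻¹ * a⁻¹ * b) = a⁻¹ * b := by group
  rw [e] at h2
  have e2 : (a * z)⁻¹ * b = z⁻¹ * a⁻¹ * b := by group
  rw [gpr, gpr, e2]; linarith

/-- The local condition on consecutive letters `a`, `b` of a word: the turn at the vertex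
between them is small compared with both edges. -/
def SmallTurn (p : X) (α : ℝ) (a b : G) : Prop :=
  gpr p a⁻¹ b ≤ len p a / 2 - α ∧ gpr p a⁻¹ b ≤ len p b / 2 - α

/-- Local-to-global principle: along a broken geodesic with small turns, the turn between the
first edge and the whole remaining path is at most the first turn, up to `δ`. -/
theorem HypAct.chain_gpr (H : HypAct G X δ) (p : X) {α : ℝ} (hα : δ < α) :
    ∀ (l : List G) (a b : G), (a :: b :: l).IsChain (SmallTurn p α) →
      gpr p a⁻¹ (b :: l).prod ≤ gpr p a⁻¹ b + δ := by
  intro l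
  induction l with
  | nil => intro a b _; simp [H.pos.le]
  | cons c l ih =>
    intro a b h
    rw [List.isChain_cons_cons] at h
    have h1 := ih b c h.2
    have h2 := h.2
    rw [List.isChain_cons_cons] at h2
    have e : (b :: c :: l).prod = b * (c :: l).prod := List.prod_cons
    have h3 := H.gpr_mul_left p b (c :: l).prod
    rw [e]
    have hab := h.1.2
    have hbc := h2.1.1
    rcases H.len_hyp p a⁻¹ (b * (c :: l).prod) b with h4 | h4
    · exact h4
    · linarith

theorem HypAct.chain_len (H : HypAct G X δ) (p : X) {α : ℝ} (hα : δ < α)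
    (l : List G) (a b : G) (h : (a :: b :: l).IsChain (SmallTurn p α)) :
    len p a + len p (b :: l).prod - 2 * gpr p a⁻¹ b - 2 * δ ≤ len p (a :: b :: l).prod := by
  have h1 := H.chain_gpr p hα l a b h
  have e : (a :: b :: l).prod = a * (b :: l).prod := List.prod_cons
  rw [e, H.len_mul]
  linarith

/-- A broken geodesic with small turns never returns to its origin. -/
theorem HypAct.chain_pos (H : HypAct G X δ) (p : X) {α : ℝ} (hα : δ < α) :
    ∀ (l : List G) (a : G), (a :: l).IsChain (SmallTurn p α) → 0 < len p a →
      0 < len p (a :: l).prod := by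
  intro l
  induction l with
  | nil => intro a _ ha; simpa using ha
  | cons b l ih =>
    intro a h ha
    have h1 := H.chain_len p hα l a b h
    rw [List.isChain_cons_cons] at h
    have hb : 0 < len p b := by
      have := h.1.2
      have h0 : 0 ≤ gpr p a⁻¹ b := by
        rw [gpr]
        have := H.len_mul_le p a⁻¹⁻¹ b
        rw [H.len_inv p a⁻¹] at this
        linarith
      have := H.pos
      linarith
    have h2 := ih b h.2 hb
    have := h.1.1
    linarith

/-! ### Powers of an element with a small turn -/

/-- `LoxData p g L`: the orbit `n ↦ gⁿp` is a quasi-geodesic with constants measured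
in units of `L`. -/
structure LoxData (p : X) (g : G) (L : ℝ) : Prop where
  low : ∀ n : ℕ, n * L / 100 ≤ len p (g ^ n)
  up : ∀ n : ℕ, len p (g ^ n) ≤ 2 * n * L
  turn : ∀ n m : ℕ, gpr p (g ^ n)⁻¹ (g ^ m) ≤ L

theorem HypAct.pow_turn_one (H : HypAct G X δ) (p : X) {α : ℝ} (hα : δ < α) {g : G}
    (hg : gpr p g⁻¹ g ≤ len p g / 2 - α) (m : ℕ) :
    gpr p g⁻¹ (g ^ (m + 1)) ≤ gpr p g⁻¹ g + δ := by
  have h := H.chain_gpr p hα (List.replicate m g) g g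
    (by
      have := List.isChain_replicate_of_rel (r := SmallTurn p α) (m + 2) (a := g) ⟨hg, hg⟩
      simpa [List.replicate_succ] using this)
  have e : (g :: List.replicate m g).prod = g ^ (m + 1) := by
    rw [← List.replicate_succ, List.prod_replicate]
  rwa [e] at h

theorem HypAct.pow_len (H : HypAct G X δ) (p : X) {α : ℝ} (hα : δ < α) {g : G}
    (hg : gpr p g⁻¹ g ≤ len p g / 2 - α) (n : ℕ) :
    n * (2 * α - 2 * δ) ≤ len p (g ^ n) := by
  induction n with
  | zero => simp [len_one]
  | succ n ih =>
    rcases Nat.eq_zero_or_pos n with h0 | h0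
    · subst h0
      have h0 : 0 ≤ gpr p g⁻¹ g := by
        rw [gpr]
        have := H.len_mul_le p g⁻¹⁻¹ g
        rw [H.len_inv p g⁻¹] at this
        linarith
      have := H.pos
      simp; linarith
    · obtain ⟨m, rfl⟩ : ∃ m, n = m + 1 := ⟨n - 1, by omega⟩
      have h1 := H.pow_turn_one p hα hg m
      rw [pow_succ' g (m + 1), H.len_mul]
      push_cast at ih ⊢
      linarith

theorem HypAct.loxData (H : HypAct G X δ) (p : X) {L : ℝ} (hL : 1000 * δ ≤ L) {g : G}
    (hgL : len p g ≤ 2 * L) (hg : gpr p g⁻¹ g ≤ len p g / 2 - L / 100) :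
    LoxData p g L := by
  have hδ := H.pos
  have hα : δ < L / 100 := by linarith
  have hg' : gpr p (g⁻¹)⁻¹ g⁻¹ ≤ len p g⁻¹ / 2 - L / 100 := by
    rw [H.gpr_comm, inv_inv, H.len_inv]; exact hg
  have hup : ∀ n : ℕ, len p (g ^ n) ≤ 2 * n * L := by
    intro n
    induction n with
    | zero => simp [len_one]
    | succ n ih =>
      have := H.len_mul_le p (g ^ n) g
      rw [pow_succ]; push_cast; linarith
  refine ⟨fun n => ?_, hup, fun n m => ?_⟩
  · have h1 := H.pow_len p hα hg n
    have : (n : ℝ) * (L / 100) ≤ n * (2 * (L / 100) - 2 * δ) :=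
      mul_le_mul_of_nonneg_left (by linarith) (Nat.cast_nonneg n)
    linarith
  · rcases n with _ | n
    · have := H.gpr_le_left p (g ^ 0)⁻¹ (g ^ m)
      simp only [pow_zero, inv_one, len_one] at this ⊢
      linarith
    rcases m with _ | m
    · have := H.gpr_le_right p (g ^ (n + 1))⁻¹ (g ^ 0)
      simp only [pow_zero, len_one] at this ⊢
      linarith
    have h1 := H.pow_turn_one p hα hg m
    rcases n with _ | n
    · simp only [zero_add, pow_one]; linarith
    have h2 := H.pow_turn_one p hα hg' n
    rw [inv_inv, H.gpr_comm p g g⁻¹] at h2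
    have h3 := H.gpr_mul_left p g⁻¹ (g⁻¹ ^ (n + 1))
    rw [← pow_succ', inv_pow, inv_inv, H.len_inv, H.gpr_comm] at h3
    rcases H.len_hyp p g⁻¹ (g ^ (n + 2))⁻¹ (g ^ (m + 1)) with h4 | h4
    · linarith
    · linarith

theorem HypAct.loxData_inv (H : HypAct G X δ) {p : X} {L : ℝ} {g : G} (h : LoxData p g L) :
    LoxData p g⁻¹ L := by
  refine ⟨fun n => ?_, fun n => ?_, fun n m => ?_⟩
  · rw [inv_pow, H.len_inv]; exact h.low n
  · rw [inv_pow, H.len_inv]; exact h.up n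
  · rw [inv_pow, inv_pow, inv_inv, H.gpr_comm]; exact h.turn m n

end Length

/-! ### Almost translations and almost reflections of a long segment -/

/-- A coordinate along the segment `[p,q]`: for a point of the segment it is twice the signed
distance to the midpoint. -/
def bet {X : Type*} [MetricSpace X] (p q z : X) : ℝ := dist p z - dist q z

/-- `z` is close (excess `e`) to the segment `[p,q]`, with coordinate at most `B`. -/
def InStrip {X : Type*} [MetricSpace X] (p q : X) (B e : ℝ) (z : X) : Prop :=
  |bet p q z| ≤ B ∧ gromov p q z ≤ e

/-- `a` almost fixes (`s = 1`) or almost exchanges (`s = -1`) the points `p` and `q`, with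
error `D`. -/
def QMove {G X : Type*} [Group G] [MetricSpace X] [MulAction G X] (p q : X) (D s : ℝ) (a : G) :
    Prop :=
  (s = 1 ∧ dist (a • p) p ≤ D ∧ dist (a • q) q ≤ D) ∨
    (s = -1 ∧ dist (a • p) q ≤ D ∧ dist (a • q) p ≤ D)

section Strip

variable {G X : Type*} [Group G] [MetricSpace X] [MulAction G X] {δ : ℝ}

theorem HypAct.qmove_inv (H : HypAct G X δ) {p q : X} {D s : ℝ} {a : G} (h : QMove p q D s a) :
    QMove p q D s a⁻¹ := by
  have e : ∀ x y : X, dist (a⁻¹ • x) y = dist (a • y) x := fun x y => by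
    rw [H.dist_smul_left, inv_inv, dist_comm]
  unfold QMove at *
  rw [e, e, e, e]
  tauto

theorem HypAct.strip_dist (H : HypAct G X δ) (p q z y : X) :
    dist z y ≤ |bet p q z - bet p q y| / 2 + gromov p q z + gromov p q y + 2 * δ := by
  have h1 := le_abs_self (bet p q z - bet p q y)
  have h2 := neg_abs_le (bet p q z - bet p q y)
  have h := H.four p z q y
  have c1 := dist_comm z q
  have c2 := dist_comm p y
  simp only [bet, gromov] at *
  rcases h with h | h <;> linarith

theorem bet_lipschitz (p q z y : X) : |bet p q z - bet p q y| ≤ 2 * dist z y := by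
  have h1 := dist_triangle p z y
  have h2 := dist_triangle p y z
  have h3 := dist_triangle q z y
  have h4 := dist_triangle q y z
  have c := dist_comm z y
  rw [abs_le]; simp only [bet]
  constructor <;> linarith

/-- If `p` and `p'` are close compared with their distances to `z` and `y`, then
`d(p',·) - d(p,·)` takes almost the same value at `z` and at `y`. -/
theorem HypAct.osc_aux (H : HypAct G X δ) {p p' z y : X} {D : ℝ} (hp : dist p' p ≤ D)
    (h : 2 * D + dist z y ≤ dist p y + dist p z) :
    dist p' z + dist p y ≤ dist p' y + dist p z + 2 * δ := by
  have t := dist_triangle p p' y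
  have c := dist_comm p p'
  rcases H.four p' p z y with h1 | h1 <;> linarith

theorem InStrip.dist_left {p q z : X} {B e : ℝ} (h : InStrip p q B e z) :
    (dist p q - B) / 2 ≤ dist p z ∧ (dist p q - B) / 2 ≤ dist q z := by
  have h1 := abs_le.1 h.1
  have t := dist_triangle p z q
  have c := dist_comm z q
  simp only [bet] at h1
  constructor <;> linarith

/-- An almost translation has an almost constant translation length along the strip, and an
almost reflection an almost constant centre. -/
theorem HypAct.osc (H : HypAct G X δ) {p q z y : X} {B e D s : ℝ} {a : G}
    (ha : QMove p q D s a) (hz : InStrip p q B e z) (hy : InStrip p q B e y)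
    (hl : 2 * D + 2 * B + 2 * e + 2 * δ ≤ dist p q) :
    |bet p q (a • z) - s * bet p q z - (bet p q (a • y) - s * bet p q y)| ≤ 4 * δ := by
  have hd := H.strip_dist p q z y
  have hB : |bet p q z - bet p q y| ≤ 2 * B := by
    have h1 := abs_le.1 hz.1
    have h2 := abs_le.1 hy.1
    rw [abs_le]; constructor <;> linarith
  have hez := hz.2
  have hey := hy.2
  have d1 := hz.dist_left
  have d2 := hy.dist_left
  have c := dist_comm z y
  have E : ∀ x w : X, dist x (a • w) = dist (a⁻¹ • x) w := fun x w => by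
    rw [H.dist_smul_left, inv_inv]
  have key : ∀ x x' : X, (x = p ∨ x = q) → dist x' x ≤ D →
      dist x' z + dist x y ≤ dist x' y + dist x z + 2 * δ ∧
      dist x' y + dist x z ≤ dist x' z + dist x y + 2 * δ := by
    intro x x' hx hxx
    constructor
    · apply H.osc_aux hxx
      rcases hx with rfl | rfl <;> linarith
    · apply H.osc_aux hxx
      rcases hx with rfl | rfl <;> linarith
  simp only [bet, E]
  rcases H.qmove_inv ha with ⟨rfl, h1, h2⟩ | ⟨rfl, h1, h2⟩
  · have k1 := key p _ (Or.inl rfl) h1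
    have k2 := key q _ (Or.inr rfl) h2
    rw [abs_le]; constructor <;> linarith
  · have k1 := key q _ (Or.inr rfl) h1
    have k2 := key p _ (Or.inl rfl) h2
    rw [abs_le]; constructor <;> linarith

theorem HypAct.excess_move (H : HypAct G X δ) {x y p q w : X} {e D : ℝ}
    (hx : dist x p ≤ D) (hy : dist y q ≤ D) (h : gromov x y w ≤ e)
    (h1 : D + e + 2 * δ < dist x w) (h2 : D + e + 2 * δ < dist y w) :
    gromov p q w ≤ e + 2 * δ := by
  have hδ := H.pos
  have a1 := H.hyp x p y w
  have a2 := H.hyp p q y w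
  have t1 := dist_triangle x p w
  have t2 := dist_triangle y q w
  have b1 : D + e + 2 * δ < gromov x p w + D := by simp only [gromov]; linarith
  have b2 : D + e + 2 * δ < gromov q y w + D := by
    have := dist_comm q y
    simp only [gromov]; linarith
  rcases min_cases (gromov x p w) (gromov p y w) with m | m
  · linarith
  rcases min_cases (gromov p q w) (gromov q y w) with n | n <;> linarith

theorem gromov_comm {X : Type*} [MetricSpace X] (x y t : X) : gromov x y t = gromov y x t := by
  simp only [gromov, dist_comm x y]; ring

theorem HypAct.strip_move (H : HypAct G X δ) {p q z : X} {B e D s : ℝ} {a : G}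
    (ha : QMove p q D s a) (hz : InStrip p q B e z)
    (hl : 2 * D + B + 2 * e + 4 * δ < dist p q) :
    InStrip p q (B + 2 * D) (e + 2 * δ) (a • z) := by
  have d1 := hz.dist_left
  have hb := abs_le.1 hz.1
  have he := hz.2
  have g1 : gromov (a • p) (a • q) (a • z) ≤ e := by
    simpa only [gromov, H.dist_smul] using he
  have g2 : gromov (a • q) (a • p) (a • z) ≤ e := by rwa [gromov_comm]
  have e1 := H.dist_smul a p z
  have e2 := H.dist_smul a q z
  have tri : ∀ x y w : X, dist x y ≤ D → |dist y w - dist x w| ≤ D := by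
    intro x y w h
    have t1 := dist_triangle x y w
    have t2 := dist_triangle y x w
    have c := dist_comm x y
    rw [abs_le]; constructor <;> linarith
  rcases ha with ⟨-, h1, h2⟩ | ⟨-, h1, h2⟩
  · have t1 := abs_le.1 (tri _ _ (a • z) h1)
    have t2 := abs_le.1 (tri _ _ (a • z) h2)
    refine ⟨?_, H.excess_move h1 h2 g1 (by linarith) (by linarith)⟩
    simp only [bet] at *
    rw [abs_le]; constructor <;> linarith
  · have t1 := abs_le.1 (tri _ _ (a • z) h1)
    have t2 := abs_le.1 (tri _ _ (a • z) h2)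
    refine ⟨?_, H.excess_move h2 h1 g2 (by linarith) (by linarith)⟩
    simp only [bet] at *
    rw [abs_le]; constructor <;> linarith

theorem InStrip.mono {p q z : X} {B e B' e' : ℝ} (h : InStrip p q B e z) (hB : B ≤ B')
    (he : e ≤ e') : InStrip p q B' e' z := ⟨h.1.trans hB, h.2.trans he⟩

/-- Two almost translations almost commute in the middle of the segment. -/
theorem HypAct.comm_small (H : HypAct G X δ) {p q x : X} {B D : ℝ} {a b : G}
    (hD : 0 ≤ D) (ha : QMove p q D 1 a) (hb : QMove p q D 1 b) (hx : InStrip p q B 0 x)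
    (hl : 20 * D + 2 * B + 40 * δ ≤ dist p q) :
    dist ((b * a * b⁻¹ * a⁻¹) • x) x ≤ 100 * δ := by
  have hδ := H.pos
  have hB : 0 ≤ B := (abs_nonneg _).trans hx.1
  have s1 := H.strip_move (H.qmove_inv ha) hx (by linarith)
  have s2 := H.strip_move (H.qmove_inv hb) s1 (by linarith)
  have s3 := H.strip_move ha s2 (by linarith)
  have s4 := H.strip_move hb s3 (by linarith)
  have m : ∀ {B' e' z}, InStrip p q B' e' z → B' ≤ B + 8 * D → e' ≤ 8 * δ →
    InStrip p q (B + 8 * D) (8 * δ) z := fun h h1 h2 => h.mono h1 h2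
  have hl' : 2 * D + 2 * (B + 8 * D) + 2 * (8 * δ) + 2 * δ ≤ dist p q := by linarith
  have o1 := abs_le.1 (H.osc ha (m s1 (by linarith) (by linarith))
    (m s2 (by linarith) (by linarith)) hl')
  have o2 := abs_le.1 (H.osc hb (m s2 (by linarith) (by linarith))
    (m s3 (by linarith) (by linarith)) hl')
  rw [smul_inv_smul] at o1 o2
  rw [mul_smul, mul_smul, mul_smul]
  have hd := H.strip_dist p q (b • a • b⁻¹ • a⁻¹ • x) x
  have h4 := s4.2
  have h0 := hx.2
  have : |bet p q (b • a • b⁻¹ • a⁻¹ • x) - bet p q x| ≤ 8 * δ := by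
    rw [abs_le]; constructor <;> linarith
  linarith

/-- An almost reflection almost inverts an almost translation in the middle of the segment. -/
theorem HypAct.flip_small (H : HypAct G X δ) {p q x : X} {B D : ℝ} {a b : G}
    (hD : 0 ≤ D) (ha : QMove p q D 1 a) (hb : QMove p q D (-1) b) (hx : InStrip p q B 0 x)
    (hl : 20 * D + 2 * B + 40 * δ ≤ dist p q) :
    dist ((b * a * b⁻¹ * a) • x) x ≤ 100 * δ := by
  have hδ := H.pos
  have hB : 0 ≤ B := (abs_nonneg _).trans hx.1
  have s1 := H.strip_move ha hx (by linarith)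
  have s2 := H.strip_move (H.qmove_inv hb) s1 (by linarith)
  have s3 := H.strip_move ha s2 (by linarith)
  have s4 := H.strip_move hb s3 (by linarith)
  have m : ∀ {B' e' z}, InStrip p q B' e' z → B' ≤ B + 8 * D → e' ≤ 8 * δ →
    InStrip p q (B + 8 * D) (8 * δ) z := fun h h1 h2 => h.mono h1 h2
  have hl' : 2 * D + 2 * (B + 8 * D) + 2 * (8 * δ) + 2 * δ ≤ dist p q := by linarith
  have o1 := abs_le.1 (H.osc ha (m hx (by linarith) (by linarith))
    (m s2 (by linarith) (by linarith)) hl')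
  have o2 := abs_le.1 (H.osc hb (m s2 (by linarith) (by linarith))
    (m s3 (by linarith) (by linarith)) hl')
  rw [smul_inv_smul] at o2
  rw [mul_smul, mul_smul, mul_smul]
  have hd := H.strip_dist p q (b • a • b⁻¹ • a • x) x
  have h4 := s4.2
  have h0 := hx.2
  have : |bet p q (b • a • b⁻¹ • a • x) - bet p q x| ≤ 8 * δ := by
    rw [abs_le]; constructor <;> linarith
  linarith

/-- Two points in the middle of a long segment, at distance `κ` from each other. -/
theorem HypAct.exists_mid (H : HypAct G X δ) {p q : X} {κ : ℝ} (hκ : 0 ≤ κ)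
    (hl : 2 * κ ≤ dist p q) :
    ∃ x y : X, dist x y = κ ∧ InStrip p q (2 * κ) 0 x ∧ InStrip p q (2 * κ) 0 y := by
  obtain ⟨f, f0, f1, hf⟩ := H.geod p q
  have hpq : 0 ≤ dist p q := dist_nonneg
  have strip : ∀ t, dist p q / 2 ≤ t → t ≤ dist p q / 2 + κ → InStrip p q (2 * κ) 0 (f t) := by
    intro t h1 h2
    have ht : t ∈ Set.Icc (0 : ℝ) (dist p q) := ⟨by linarith, by linarith⟩
    have a1 := hf 0 ⟨le_refl _, hpq⟩ t ht
    have a2 := hf (dist p q) ⟨hpq, le_refl _⟩ t ht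
    rw [f0, abs_of_nonpos (by linarith [ht.1])] at a1
    rw [f1, abs_of_nonneg (by linarith [ht.2])] at a2
    refine ⟨?_, ?_⟩
    · rw [bet, a1, a2, abs_le]; constructor <;> linarith
    · rw [gromov, a1, a2]; linarith
  refine ⟨f (dist p q / 2), f (dist p q / 2 + κ), ?_, strip _ le_rfl (by linarith),
    strip _ (by linarith) le_rfl⟩
  rw [hf _ ⟨by linarith, by linarith⟩ _ ⟨by linarith, by linarith⟩, abs_of_nonpos (by linarith)]
  ring

end Strip

/-! ### Acylindricity and overlaps of axes -/

/-- Acylindricity with a natural number as bound. -/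
structure Acyl (G X : Type*) [Group G] [MetricSpace X] [MulAction G X] (δ κ : ℝ) (N : ℕ) :
    Prop where
  pos : 0 < κ
  fin : ∀ x y : X, κ ≤ dist x y →
    {g : G | dist (g • x) x ≤ 100 * δ ∧ dist (g • y) y ≤ 100 * δ}.Finite
  card : ∀ x y : X, κ ≤ dist x y →
    {g : G | dist (g • x) x ≤ 100 * δ ∧ dist (g • y) y ≤ 100 * δ}.ncard ≤ N

/-- The elements conjugating `h` to `h` or `h⁻¹`. For `h` a suitable power of a loxodromic
element `g` this is the maximal virtually cyclic subgroup containing `g`. -/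
def elem {G : Type*} [Group G] (h : G) : Subgroup G where
  carrier := {f | f * h * f⁻¹ = h ∨ f * h * f⁻¹ = h⁻¹}
  one_mem' := by simp
  mul_mem' := by
    intro a b ha hb
    have e : a * b * h * (a * b)⁻¹ = a * (b * h * b⁻¹) * a⁻¹ := by group
    have e' : a * h⁻¹ * a⁻¹ = (a * h * a⁻¹)⁻¹ := by group
    simp only [Set.mem_ofPred_eq] at *
    rw [e]
    rcases hb with hb | hb <;> rw [hb] <;> rcases ha with ha | ha
    · left; exact ha
    · right; exact ha
    · right; rw [e', ha]
    · left; rw [e', ha, inv_inv]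
  inv_mem' := by
    intro a ha
    simp only [Set.mem_ofPred_eq] at *
    rcases ha with ha | ha
    · left; nth_rewrite 1 [← ha]; group
    · right
      have : h⁻¹ = a⁻¹ * h * a := by
        have h2 : h = (a * h * a⁻¹)⁻¹ := by rw [ha, inv_inv]
        nth_rewrite 2 [h2]; group
      rw [inv_inv, this]

section Overlap

variable {G X : Type*} [Group G] [MetricSpace X] [MulAction G X] {δ κ : ℝ} {N : ℕ}

theorem mem_elem {h f : G} : f ∈ elem h ↔ f * h * f⁻¹ = h ∨ f * h * f⁻¹ = h⁻¹ := Iff.rfl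

theorem elem_inv (h : G) : elem h⁻¹ = elem h := by
  ext f
  have e : f * h⁻¹ * f⁻¹ = (f * h * f⁻¹)⁻¹ := by group
  rw [mem_elem, mem_elem, e, inv_inj, inv_inj]

theorem Acyl.pigeon (A : Acyl G X δ κ N) {x y : X} (hxy : κ ≤ dist x y) (e : ℕ → G)
    (he : ∀ i ≤ N, dist (e i • x) x ≤ 100 * δ ∧ dist (e i • y) y ≤ 100 * δ) :
    ∃ i j : ℕ, i < j ∧ j ≤ N ∧ e i = e j := by
  classical
  have hf := A.fin x y hxy
  have hc := A.card x y hxy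
  rw [Set.ncard_eq_toFinset_card _ hf] at hc
  obtain ⟨i, hi, j, hj, hij, h⟩ := Finset.exists_ne_map_eq_of_card_lt_of_maps_to
    (s := Finset.range (N + 1)) (t := hf.toFinset) (f := e) (by simpa using Nat.lt_succ_of_le hc)
    (fun i hi => by
      have := he i (by simpa [Nat.lt_succ_iff] using hi)
      simpa using this)
  simp only [Finset.mem_range, Nat.lt_succ_iff] at hi hj
  rcases lt_or_gt_of_ne hij with h1 | h1
  · exact ⟨i, j, h1, hj, h⟩
  · exact ⟨j, i, h1, hi, h.symm⟩

theorem HypAct.pow_qmove (H : HypAct G X δ) {p : X} {g : G} {L D : ℝ} (hg : LoxData p g L)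
    (hL : 0 ≤ L) (hD : 2 * N * L ≤ D) (J i : ℕ) (hi : i ≤ N) :
    QMove p (g ^ J • p) D 1 (g ^ i) := by
  have h1 : len p (g ^ i) ≤ D := by
    have := hg.up i
    have h2 : (2 * (i : ℝ)) * L ≤ 2 * N * L :=
      mul_le_mul_of_nonneg_right (by have : (i : ℝ) ≤ N := by exact_mod_cast hi
                                     linarith) hL
    linarith
  refine Or.inl ⟨rfl, h1, ?_⟩
  rw [← mul_smul, ← pow_add, add_comm, pow_add, mul_smul, H.dist_smul]
  exact h1

theorem dist_pow (p : X) (g : G) : dist p (g • p) = len p g := dist_comm _ _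

/-- An almost translation of a long piece of the axis of `g` commutes with a power of `g`: the
commutators with `g⁰, …, g^N` almost fix two points at distance `κ`, so two of them agree. -/
theorem HypAct.commute_of_qmove (H : HypAct G X δ) (A : Acyl G X δ κ N) {p : X} {g f : G}
    {L D : ℝ} (hg : LoxData p g L) (hL : 0 ≤ L) (hD : 2 * N * L ≤ D) {J : ℕ}
    (hJ : 20 * D + 4 * κ + 40 * δ ≤ len p (g ^ J)) (hf : QMove p (g ^ J • p) D 1 f) :
    f * g ^ N.factorial * f⁻¹ = g ^ N.factorial := by
  have hδ := H.pos
  have hκ := A.pos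
  have hD0 : 0 ≤ D := le_trans (by positivity) hD
  rw [← dist_pow] at hJ
  obtain ⟨x, y, hxy, hx, hy⟩ := H.exists_mid hκ.le (by linarith : 2 * κ ≤ dist p (g ^ J • p))
  obtain ⟨i, j, hij, hj, he⟩ := A.pigeon hxy.ge (fun i => f * g ^ i * f⁻¹ * (g ^ i)⁻¹)
    (fun i hi => ⟨H.comm_small hD0 (H.pow_qmove hg hL hD J i hi) hf hx (by linarith),
      H.comm_small hD0 (H.pow_qmove hg hL hD J i hi) hf hy (by linarith)⟩)
  obtain ⟨k, rfl⟩ : ∃ k, j = i + k := ⟨j - i, by omega⟩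
  have key : f * g ^ k * f⁻¹ = g ^ k := by
    simp only [pow_add] at he
    have e1 : f * (g ^ i * g ^ k) * f⁻¹ * (g ^ i * g ^ k)⁻¹
        = (f * g ^ i * f⁻¹) * (f * g ^ k * f⁻¹ * (g ^ k)⁻¹) * (g ^ i)⁻¹ := by group
    rw [e1] at he
    have h2 := mul_right_cancel he
    have h3 : (f * g ^ k * f⁻¹ * (g ^ k)⁻¹) = 1 := by
      have : (f * g ^ i * f⁻¹) * 1 = (f * g ^ i * f⁻¹) * (f * g ^ k * f⁻¹ * (g ^ k)⁻¹) := by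
        rw [mul_one]; exact h2
      exact (mul_left_cancel this).symm
    exact mul_inv_eq_one.1 h3
  obtain ⟨r, hr⟩ := Nat.dvd_factorial (by omega : 0 < k) (by omega : k ≤ N)
  rw [hr, pow_mul, ← conj_pow, key]

/-- The counterpart of `HypAct.commute_of_qmove` for almost reflections. -/
theorem HypAct.invert_of_qmove (H : HypAct G X δ) (A : Acyl G X δ κ N) {p : X} {g f : G}
    {L D : ℝ} (hg : LoxData p g L) (hL : 0 ≤ L) (hD : 2 * N * L ≤ D) {J : ℕ}
    (hJ : 20 * D + 4 * κ + 40 * δ ≤ len p (g ^ J)) (hf : QMove p (g ^ J • p) D (-1) f) :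
    f * g ^ N.factorial * f⁻¹ = (g ^ N.factorial)⁻¹ := by
  have hδ := H.pos
  have hκ := A.pos
  have hD0 : 0 ≤ D := le_trans (by positivity) hD
  rw [← dist_pow] at hJ
  obtain ⟨x, y, hxy, hx, hy⟩ := H.exists_mid hκ.le (by linarith : 2 * κ ≤ dist p (g ^ J • p))
  obtain ⟨i, j, hij, hj, he⟩ := A.pigeon hxy.ge (fun i => f * g ^ i * f⁻¹ * (g ^ i))
    (fun i hi => ⟨H.flip_small hD0 (H.pow_qmove hg hL hD J i hi) hf hx (by linarith),
      H.flip_small hD0 (H.pow_qmove hg hL hD J i hi) hf hy (by linarith)⟩)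
  obtain ⟨k, rfl⟩ : ∃ k, j = i + k := ⟨j - i, by omega⟩
  have key : f * g ^ k * f⁻¹ = (g ^ k)⁻¹ := by
    have e1 : f * g ^ (i + k) * f⁻¹ * g ^ (i + k)
        = (f * g ^ i * f⁻¹) * (f * g ^ k * f⁻¹ * g ^ k) * g ^ i := by
      have : g ^ (i + k) = g ^ k * g ^ i := by rw [add_comm, pow_add]
      nth_rewrite 2 [this]
      rw [pow_add]; group
    rw [e1] at he
    have h2 := mul_right_cancel he
    have h3 : (f * g ^ k * f⁻¹ * g ^ k) = 1 := by
      have : (f * g ^ i * f⁻¹) * 1 = (f * g ^ i * f⁻¹) * (f * g ^ k * f⁻¹ * g ^ k) := by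
        rw [mul_one]; exact h2
      exact (mul_left_cancel this).symm
    exact mul_eq_one_iff_eq_inv.1 h3
  obtain ⟨r, hr⟩ := Nat.dvd_factorial (by omega : 0 < k) (by omega : k ≤ N)
  rw [hr, pow_mul, ← conj_pow, key, inv_pow]

theorem HypAct.gpr_left_mul (H : HypAct G X δ) (p : X) (f a b : G) :
    gpr p a b - len p f ≤ gpr p (f * a) (f * b) := by
  have h : ∀ c : G, len p c - len p f ≤ len p (f * c) := fun c => by
    have := H.len_mul_le p f⁻¹ (f * c)
    rw [inv_mul_cancel_left, H.len_inv] at this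
    linarith
  have e : (f * a)⁻¹ * (f * b) = a⁻¹ * b := by group
  have h1 := h a
  have h2 := h b
  rw [gpr, gpr, e]; linarith

/-- If the axis of `g` and the `f`-translate of the axis of `g'` fellow travel for long after
`p`, then `f` maps `g'^J p` close to `g^J p`. -/
theorem HypAct.overlap_core (H : HypAct G X δ) {p : X} {g g' f : G} {L : ℝ}
    (hg : LoxData p g L) (hg' : LoxData p g' L) (hL : 10 ^ 4 * δ ≤ L) (hf : len p f ≤ 4 * L)
    {J n m : ℕ} (hJ : len p (g' ^ J) = len p (g ^ J))
    (h : (2 * J + 4) * L < gpr p (g ^ n) (f * g' ^ m)) :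
    len p ((f * g' ^ J)⁻¹ * g ^ J) ≤ 16 * L := by
  have hδ := H.pos
  have hL0 : 0 < L := by linarith
  have hn : J ≤ n := by
    by_contra hc
    have h1 := H.gpr_le_left p (g ^ n) (f * g' ^ m)
    have h2 := hg.up n
    have h3 : (2 * (n : ℝ)) * L ≤ (2 * J) * L :=
      mul_le_mul_of_nonneg_right (by have : (n : ℝ) ≤ J := by exact_mod_cast (by omega : n ≤ J)
                                     linarith) hL0.le
    linarith
  have hm : J ≤ m := by
    by_contra hc
    have h1 := H.gpr_le_right p (g ^ n) (f * g' ^ m)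
    have h2 := hg'.up m
    have h4 := H.len_mul_le p f (g' ^ m)
    have h3 : (2 * (m : ℝ)) * L ≤ (2 * J) * L :=
      mul_le_mul_of_nonneg_right (by have : (m : ℝ) ≤ J := by exact_mod_cast (by omega : m ≤ J)
                                     linarith) hL0.le
    linarith
  obtain ⟨n, rfl⟩ := Nat.exists_eq_add_of_le hn
  obtain ⟨m, rfl⟩ := Nat.exists_eq_add_of_le hm
  have a1 := H.gpr_mul_left p (g ^ J) (g ^ n)
  have a2 := H.gpr_mul_left p (g' ^ J) (g' ^ m)
  rw [← pow_add] at a1 a2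
  have t1 := hg.turn J n
  have t2 := hg'.turn J m
  have a3 := H.gpr_left_mul p f (g' ^ (J + m)) (g' ^ J)
  have u := hg.up J
  have key : len p (g ^ J) - 6 * L ≤ gpr p (f * g' ^ J) (g ^ J) := by
    rcases H.len_hyp p (f * g' ^ J) (f * g' ^ (J + m)) (g ^ J) with b | b
    · rw [H.gpr_comm p (f * g' ^ J)] at b
      linarith
    · rcases H.len_hyp p (f * g' ^ (J + m)) (g ^ (J + n)) (g ^ J) with b' | b'
      · rw [H.gpr_comm p (f * g' ^ (J + m))] at b'
        linarith
      · linarith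
  have l1 := H.len_mul_le p f (g' ^ J)
  rw [gpr] at key
  linarith

theorem HypAct.overlap_same (H : HypAct G X δ) (A : Acyl G X δ κ N) {p : X} {g f : G} {L : ℝ}
    (hg : LoxData p g L) (hL : 10 ^ 4 * δ ≤ L) (hκ : 10 ^ 4 * κ ≤ L) (hf : len p f ≤ 4 * L)
    {J n m : ℕ} (hJ : 10 ^ 4 * (16 + 2 * N) ≤ J)
    (h : (2 * J + 4) * L < gpr p (g ^ n) (f * g ^ m)) :
    f ∈ elem (g ^ N.factorial) := by
  have hδ := H.pos
  have hL0 : 0 < L := by linarith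
  have h1 := H.overlap_core hg hg hL hf rfl h
  rw [← H.dist_eq_len, mul_smul] at h1
  have hJL : (10 ^ 4 * (16 + 2 * (N : ℝ))) * L ≤ J * L :=
    mul_le_mul_of_nonneg_right (by exact_mod_cast hJ) hL0.le
  have hNL : 0 ≤ (N : ℝ) * L := by positivity
  left
  refine H.commute_of_qmove A hg hL0.le (D := (16 + 2 * N) * L) (J := J) (by linarith)
    (by have := hg.low J; linarith) (Or.inl ⟨rfl, ?_, by linarith⟩)
  have : dist (f • p) p = len p f := rfl
  linarith

theorem HypAct.overlap_opp (H : HypAct G X δ) (A : Acyl G X δ κ N) {p : X} {g f : G} {L : ℝ}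
    (hg : LoxData p g L) (hL : 10 ^ 4 * δ ≤ L) (hκ : 10 ^ 4 * κ ≤ L) (hf : len p f ≤ 4 * L)
    {J n m : ℕ} (hJ : 10 ^ 4 * (16 + 2 * N) ≤ J)
    (h : (2 * J + 4) * L < gpr p (g ^ n) (f * g⁻¹ ^ m)) :
    f ∈ elem (g ^ N.factorial) := by
  have hδ := H.pos
  have hL0 : 0 < L := by linarith
  have h1 := H.overlap_core hg (H.loxData_inv hg) hL hf (by rw [inv_pow, H.len_inv]) h
  rw [← H.dist_eq_len, inv_pow] at h1
  have hJL : (10 ^ 4 * (16 + 2 * (N : ℝ))) * L ≤ J * L :=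
    mul_le_mul_of_nonneg_right (by exact_mod_cast hJ) hL0.le
  have hNL : 0 ≤ (N : ℝ) * L := by positivity
  right
  -- `f g⁻ᴶ` almost exchanges `p` and `gᴶ p`, and conjugates `g` exactly as `f` does.
  have h2 := H.invert_of_qmove A (f := f * (g ^ J)⁻¹) hg hL0.le (D := (16 + 2 * N) * L) (J := J)
    (by linarith)
    (by have := hg.low J; linarith) (Or.inr ⟨rfl, by linarith, by
      rw [← mul_smul, inv_mul_cancel_right]
      have : dist (f • p) p = len p f := rfl
      linarith⟩)
  have e : f * (g ^ J)⁻¹ * g ^ N.factorial * (f * (g ^ J)⁻¹)⁻¹ = f * g ^ N.factorial * f⁻¹ := by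
    have c : g ^ N.factorial * g ^ J = g ^ J * g ^ N.factorial := pow_mul_comm _ _ _
    calc f * (g ^ J)⁻¹ * g ^ N.factorial * (f * (g ^ J)⁻¹)⁻¹
        = f * (g ^ J)⁻¹ * (g ^ N.factorial * g ^ J) * f⁻¹ := by group
      _ = f * g ^ N.factorial * f⁻¹ := by rw [c]; group
  rwa [e] at h2

/-- Bounded overlap: if `f` moves `p` by at most `4L` and lies outside the elementary subgroup
of `g`, the axes of `g` and of `f g f⁻¹` fellow travel for a length at most `(2J + 4)L`. -/
theorem HypAct.overlap (H : HypAct G X δ) (A : Acyl G X δ κ N) {p : X} {g f : G} {L : ℝ}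
    (hg : LoxData p g L) (hL : 10 ^ 4 * δ ≤ L) (hκ : 10 ^ 4 * κ ≤ L) (hf : len p f ≤ 4 * L)
    {J : ℕ} (hJ : 10 ^ 4 * (16 + 2 * N) ≤ J) (hfE : f ∉ elem (g ^ N.factorial)) (n m : ℤ) :
    gpr p (g ^ n) (f * g ^ m) ≤ (2 * J + 4) * L := by
  by_contra! h
  apply hfE
  have hgi := H.loxData_inv hg
  have ee : elem (g⁻¹ ^ N.factorial) = elem (g ^ N.factorial) := by rw [inv_pow, elem_inv]
  obtain ⟨n, rfl | rfl⟩ := n.eq_nat_or_neg <;> obtain ⟨m, rfl | rfl⟩ := m.eq_nat_or_neg <;>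
    simp only [zpow_neg, zpow_natCast] at h
  · exact H.overlap_same A hg hL hκ hf hJ h
  · exact H.overlap_opp A hg hL hκ hf hJ (by rw [inv_pow]; exact h)
  · rw [← ee]
    exact H.overlap_opp A hgi hL hκ hf hJ (n := n) (m := m) (by rw [inv_pow, inv_inv]; exact h)
  · rw [← ee]
    exact H.overlap_same A hgi hL hκ hf hJ (n := n) (m := m) (by rw [inv_pow, inv_pow]; exact h)

end Overlap

/-! ### The elementary subgroup -/

section Elementary

variable {G X : Type*} [Group G] [MetricSpace X] [MulAction G X] {δ κ : ℝ} {N : ℕ}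

/-- Acylindricity makes the set of almost translations of a long segment finite: classify them
by the coordinate of the image of one point in the middle. -/
theorem HypAct.qmove_finite (H : HypAct G X δ) (A : Acyl G X δ κ N) {p q : X} {D : ℝ}
    (hD : 0 ≤ D) (hl : 20 * D + 8 * κ + 40 * δ ≤ dist p q) : {f : G | QMove p q D 1 f}.Finite := by
  have hδ := H.pos
  have hκ := A.pos
  obtain ⟨x, y, hxy, hx, hy⟩ := H.exists_mid hκ.le (by linarith : 2 * κ ≤ dist p q)
  set c : G → ℤ := fun f => ⌊bet p q (f • x) / δ⌋ with hc
  have hbd : ∀ f ∈ {f : G | QMove p q D 1 f},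
      c f ∈ Set.Icc ⌊-(2 * κ + 2 * D) / δ⌋ ⌊(2 * κ + 2 * D) / δ⌋ := by
    intro f hf
    have h1 := abs_le.1 (H.strip_move hf hx (by linarith)).1
    exact ⟨Int.floor_le_floor (by gcongr; linarith), Int.floor_le_floor (by gcongr; linarith)⟩
  have hfin : ∀ b : ℤ, {f : G | QMove p q D 1 f ∧ c f = b}.Finite := by
    intro b
    rcases Set.eq_empty_or_nonempty {f : G | QMove p q D 1 f ∧ c f = b} with h0 | ⟨f, hf, hfb⟩
    · rw [h0]; exact Set.finite_empty
    refine ((A.fin x y hxy.ge).image (fun z => f * z)).subset ?_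
    rintro f' ⟨hf', hfb'⟩
    refine ⟨f⁻¹ * f', ?_, by simp⟩
    have s1 := H.strip_move hf hx (by linarith)
    have s2 := H.strip_move hf' hx (by linarith)
    have s3 := H.strip_move hf hy (by linarith)
    have s4 := H.strip_move hf' hy (by linarith)
    have o1 := abs_le.1 (H.osc hf hx hy (by linarith))
    have o2 := abs_le.1 (H.osc hf' hx hy (by linarith))
    have d1 := H.strip_dist p q (f' • x) (f • x)
    have d2 := H.strip_dist p q (f' • y) (f • y)
    have hb : |bet p q (f' • x) / δ - bet p q (f • x) / δ| < 1 :=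
      Int.abs_sub_lt_one_of_floor_eq_floor (by
        have : c f' = c f := by rw [hfb, hfb']
        exact this)
    rw [← sub_div, abs_div, abs_of_pos hδ, div_lt_one hδ] at hb
    have hb2 : |bet p q (f' • y) - bet p q (f • y)| ≤ 9 * δ := by
      have := abs_lt.1 hb
      rw [abs_le]; constructor <;> linarith
    have := s1.2
    have := s2.2
    have := s3.2
    have := s4.2
    refine ⟨?_, ?_⟩ <;> rw [mul_smul, H.dist_smul_left, inv_inv] <;> linarith
  have : {f : G | QMove p q D 1 f} ⊆
      ⋃ b ∈ Set.Icc ⌊-(2 * κ + 2 * D) / δ⌋ ⌊(2 * κ + 2 * D) / δ⌋,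
        {f : G | QMove p q D 1 f ∧ c f = b} := by
    intro f hf
    simp only [Set.mem_iUnion]
    exact ⟨c f, hbd f hf, hf, rfl⟩
  exact ((Set.finite_Icc _ _).biUnion fun b _ => hfin b).subset this

theorem HypAct.qmove_of_commute (H : HypAct G X δ) (p : X) {f h : G} (hf : Commute f h) {D : ℝ}
    (hD : len p f ≤ D) (n : ℕ) : QMove p (h ^ n • p) D 1 f := by
  refine Or.inl ⟨rfl, hD, ?_⟩
  rw [← mul_smul, (hf.pow_right n).eq, mul_smul, H.dist_smul]
  exact hD

theorem LoxData.exists_large {p : X} {h : G} {L : ℝ} (hh : LoxData p h L) (hL : 0 < L) (R : ℝ) :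
    ∃ n : ℕ, ∀ m : ℕ, n ≤ m → R ≤ len p (h ^ m) := by
  obtain ⟨n, hn⟩ := exists_nat_gt (100 * R / L)
  refine ⟨n, fun m hm => le_trans ?_ (hh.low m)⟩
  rw [div_lt_iff₀ hL] at hn
  have : (n : ℝ) * L ≤ m * L := by gcongr
  linarith

theorem LoxData.pow {p : X} {g : G} {L : ℝ} (hg : LoxData p g L) (hL : 0 ≤ L)
    {K : ℕ} (hK : 1 ≤ K) : LoxData p (g ^ K) (K * L) := by
  refine ⟨fun n => ?_, fun n => ?_, fun n m => ?_⟩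
  · rw [← pow_mul]
    have := hg.low (K * n)
    push_cast at this
    linarith
  · rw [← pow_mul]
    have := hg.up (K * n)
    push_cast at this
    linarith
  · rw [← pow_mul, ← pow_mul]
    refine (hg.turn _ _).trans ?_
    have : (1 : ℝ) ≤ K := by exact_mod_cast hK
    nlinarith

/-- A representative of the coset `f⟨h⟩` of (almost) minimal length stays at bounded distance
from the base point when `f` commutes with `h`. -/
theorem HypAct.minimal_bound (H : HypAct G X δ) {p : X} {h f : G} {L : ℝ} (hh : LoxData p h L)
    (hL : 1000 * δ ≤ L) (hf : Commute f h)
    (hmin : ∀ i : ℤ, len p f - δ ≤ len p (f * h ^ i)) {j : ℕ} (hj : 3 * L ≤ len p (h ^ j)) :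
    len p f ≤ len p (h ^ j) + 4 * δ := by
  have hδ := H.pos
  have key : ∀ k : G, LoxData p k L → (∀ i : ℕ, len p f - δ ≤ len p (f * k ^ i)) →
      3 * L ≤ len p (k ^ j) → ∀ n : ℕ, gpr p (k ^ (j + n)) f⁻¹ ≤ (len p (k ^ j) + δ) / 2 + δ := by
    intro k hk hm hkj n
    have g1 : gpr p (k ^ j) f⁻¹ ≤ (len p (k ^ j) + δ) / 2 := by
      have e : (k ^ j)⁻¹ * f⁻¹ = (f * k ^ j)⁻¹ := by group
      rw [gpr, e, H.len_inv, H.len_inv]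
      have := hm j
      linarith
    have g2 : gpr p (k ^ (j + n)) (k ^ j) = len p (k ^ j) - gpr p (k ^ j)⁻¹ (k ^ n) := by
      rw [pow_add, H.gpr_mul_left]
    have g3 := hk.turn j n
    have c1 := H.gpr_comm p (k ^ j) (k ^ (j + n))
    rcases H.len_hyp p (k ^ j) (k ^ (j + n)) f⁻¹ with h1 | h1 <;> linarith
  obtain ⟨n, hn⟩ := hh.exists_large (by linarith) (len p f)
  have hn := hn (j + n) (by omega)
  have a1 := key h hh (fun i => by simpa using hmin i) hj n
  have a2 := key h⁻¹ (H.loxData_inv hh) (fun i => by simpa using hmin (-i))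
    (by rw [inv_pow, H.len_inv]; exact hj) n
  simp only [inv_pow, H.len_inv] at a2
  set k := h ^ (j + n) with hk
  have hfk : Commute f k := hf.pow_right _
  have b := H.four (k • p) p (f⁻¹ • p) ((f⁻¹ * k) • p)
  have e1 : dist (k • p) (f⁻¹ • p) = len p k + len p f - 2 * gpr p k f⁻¹ := by
    rw [H.dist_eq_len, gpr, H.len_inv]; ring
  have e2 : dist p ((f⁻¹ * k) • p) = len p k + len p f - 2 * gpr p k⁻¹ f⁻¹ := by
    rw [dist_pow, gpr, H.len_inv, H.len_inv, inv_inv, hfk.inv_left.eq]; ring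
  have e3 : dist (k • p) p = len p k := rfl
  have e4 : dist (f⁻¹ • p) ((f⁻¹ * k) • p) = len p k := by
    rw [mul_smul, H.dist_smul, dist_pow]
  have e5 : dist p (f⁻¹ • p) = len p f := by rw [dist_pow, H.len_inv]
  have e6 : dist (k • p) ((f⁻¹ * k) • p) = len p f := by
    rw [hfk.inv_left.eq, mul_smul, H.dist_smul, dist_pow, H.len_inv]
  rw [e1, e2, e3, e4, e5, e6] at b
  rcases b with b | b <;> linarith

/-- The centralizer of `h` is a finite union of cosets of `⟨h⟩`. -/
theorem HypAct.cent_reps (H : HypAct G X δ) (A : Acyl G X δ κ N) {p : X} {h : G} {L : ℝ}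
    (hh : LoxData p h L) (hL : 1000 * δ ≤ L) :
    ∃ T : Set G, T.Finite ∧ ∀ f : G, Commute f h → ∃ t ∈ T, ∃ i : ℤ, f = t * h ^ i := by
  have hδ := H.pos
  have hL0 : 0 < L := by linarith
  obtain ⟨j, hj⟩ := hh.exists_large hL0 (3 * L)
  have hj := hj j le_rfl
  set R := len p (h ^ j) + 4 * δ with hR
  have hR0 : 0 ≤ R := by have := len_nonneg p (h ^ j); linarith
  obtain ⟨n, hn⟩ := hh.exists_large hL0 (20 * R + 8 * κ + 40 * δ)
  have hn := hn n le_rfl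
  refine ⟨_, H.qmove_finite A (p := p) (q := h ^ n • p) hR0 (by rwa [dist_pow]), fun f hf => ?_⟩
  have hbdd : BddBelow (Set.range fun i : ℤ => len p (f * h ^ i)) :=
    ⟨0, by rintro _ ⟨i, rfl⟩; exact len_nonneg _ _⟩
  obtain ⟨i, hi⟩ := exists_lt_of_ciInf_lt
    (show (⨅ i : ℤ, len p (f * h ^ i)) < (⨅ i : ℤ, len p (f * h ^ i)) + δ by linarith)
  have hc : Commute (f * h ^ i) h := hf.mul_left ((Commute.refl h).zpow_left i)
  refine ⟨f * h ^ i, H.qmove_of_commute p hc ?_ n, -i, by group⟩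
  refine H.minimal_bound hh hL hc (fun k => ?_) hj
  rw [mul_assoc, ← zpow_add]
  have := ciInf_le hbdd (i + k)
  linarith

theorem HypAct.exists_pow_eq (H : HypAct G X δ) (A : Acyl G X δ κ N) {p : X} {h : G} {L : ℝ}
    (hh : LoxData p h L) (hL : 1000 * δ ≤ L) {x : G} (hx : Commute x h) :
    ∃ j : ℕ, 1 ≤ j ∧ ∃ i : ℤ, x ^ j = h ^ i := by
  obtain ⟨T, hT, hrep⟩ := H.cent_reps A hh hL
  choose t ht i hi using fun n : ℕ => hrep (x ^ n) (hx.pow_left n)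
  obtain ⟨n, -, m, -, hnm, e⟩ := Set.infinite_univ.exists_ne_map_eq_of_mapsTo
    (fun n _ => ht n : Set.MapsTo t Set.univ T) hT
  wlog hlt : n < m generalizing n m
  · exact this m n hnm.symm e.symm (by omega)
  refine ⟨m - n, by omega, i m - i n, ?_⟩
  have h1 : x ^ n * x ^ (m - n) = x ^ m := by rw [← pow_add]; congr 1; omega
  have h2 : x ^ (m - n) = (x ^ n)⁻¹ * x ^ m := by rw [← h1]; group
  rw [h2, hi n, hi m, e, zpow_sub]
  have : h ^ i m * (h ^ i n)⁻¹ = (h ^ i n)⁻¹ * h ^ i m := by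
    rw [← zpow_neg, ← zpow_add, ← zpow_add, add_comm]
  rw [this]; group

/-- An almost translation of finite order almost fixes the middle of the segment: otherwise it
would translate points there by a definite amount and have unbounded orbits. -/
theorem HypAct.torsion_small (H : HypAct G X δ) {p q z : X} {B D : ℝ} {x : G} (hD : 0 ≤ D)
    (hx : QMove p q D 1 x) (ht : IsOfFinOrder x) (hz : InStrip p q B 0 z)
    (hl : 20 * D + 2 * B + 40 * δ ≤ dist p q) : dist (x • z) z ≤ 100 * δ := by
  have hδ := H.pos
  have hB : 0 ≤ B := (abs_nonneg _).trans hz.1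
  by_contra! hlt
  have s1 := H.strip_move hx hz (by linarith)
  have d1 := H.strip_dist p q (x • z) z
  have o := abs_le.1 (H.osc hx (z := x • z) (y := z) (s1.mono le_rfl (by linarith))
    (hz.mono (by linarith) (by linarith : (0 : ℝ) ≤ 0 + 2 * δ)) (by linarith))
  have d2 := bet_lipschitz p q (x • x • z) z
  have h1 := s1.2
  have h0 := hz.2
  have h2 : 2 * dist (x • z) z - 10 * δ ≤ dist (x • x • z) z := by
    rcases abs_cases (bet p q (x • z) - bet p q z) with ⟨c, _⟩ | ⟨c, _⟩ <;>
    rcases abs_cases (bet p q (x • x • z) - bet p q z) with ⟨c', _⟩ | ⟨c', _⟩ <;>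
    rw [c] at d1 <;> rw [c'] at d2 <;> linarith
  have hg : gpr z x⁻¹ x ≤ len z x / 2 - 45 * δ := by
    rw [gpr, H.len_inv, inv_inv]
    have : len z (x * x) = dist (x • x • z) z := by rw [len, mul_smul]
    have e : len z x = dist (x • z) z := rfl
    rw [this, e]; linarith
  have h3 := H.pow_len z (by linarith : δ < 45 * δ) hg (orderOf x)
  rw [pow_orderOf_eq_one, len_one] at h3
  have : (0 : ℝ) < orderOf x := by exact_mod_cast ht.orderOf_pos
  nlinarith

/-- A set of torsion elements commuting with `h` has at most `N` elements. -/
theorem HypAct.torsion_card (H : HypAct G X δ) (A : Acyl G X δ κ N) {p : X} {h : G} {L : ℝ}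
    (hh : LoxData p h L) (hL : 0 < L) {C : Set G} (hC : ∀ x ∈ C, Commute x h ∧ IsOfFinOrder x) :
    C.Finite ∧ C.ncard ≤ N := by
  have hδ := H.pos
  have hκ := A.pos
  have key : ∀ F : Finset G, (F : Set G) ⊆ C → F.card ≤ N := by
    intro F hF
    set D := ∑ x ∈ F, len p x with hD
    have hD0 : 0 ≤ D := Finset.sum_nonneg fun x _ => len_nonneg p x
    obtain ⟨n, hn⟩ := hh.exists_large hL (20 * D + 4 * κ + 40 * δ)
    have hn := hn n le_rfl
    rw [← dist_pow] at hn
    obtain ⟨x, y, hxy, hx, hy⟩ := H.exists_mid hκ.le (by linarith : 2 * κ ≤ dist p (h ^ n • p))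
    rw [← Set.ncard_coe_finset]
    refine le_trans (Set.ncard_le_ncard (fun z hz => ?_) (A.fin x y hxy.ge)) (A.card x y hxy.ge)
    have hq := H.qmove_of_commute p (hC z (hF hz)).1
      (Finset.single_le_sum (f := fun x => len p x) (fun x _ => len_nonneg p x) hz) n
    exact ⟨H.torsion_small hD0 hq (hC z (hF hz)).2 hx (by linarith),
      H.torsion_small hD0 hq (hC z (hF hz)).2 hy (by linarith)⟩
  have hfin : C.Finite := by
    by_contra hinf
    obtain ⟨F, hF, hc⟩ := Set.Infinite.exists_subset_card_eq hinf (N + 1)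
    have := key F hF
    omega
  refine ⟨hfin, ?_⟩
  have := key hfin.toFinset (by simp)
  rwa [← Set.ncard_coe_finset, hfin.coe_toFinset] at this

/-- If `b` lies outside the elementary subgroup, the intersection of the centralizer of the
power `h` of `g` with its conjugate by `b` consists of torsion elements. -/
theorem HypAct.conj_torsion (H : HypAct G X δ) (A : Acyl G X δ κ N) {p : X} {g b x : G} {L : ℝ}
    (hg : LoxData p g L) (hL : 10 ^ 4 * δ ≤ L) (hκ : 10 ^ 4 * κ ≤ L) (hb : len p b ≤ 4 * L)
    (hbE : b ∉ elem (g ^ N.factorial)) (hx : Commute x (g ^ N.factorial))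
    (hx' : Commute (b⁻¹ * x * b) (g ^ N.factorial)) : IsOfFinOrder x := by
  have hδ := H.pos
  have hL0 : 0 < L := by linarith
  have hK : 1 ≤ N.factorial := N.factorial_pos
  have hK' : (1 : ℝ) ≤ N.factorial := by exact_mod_cast hK
  have hh := hg.pow hL0.le hK
  have hL' : 1000 * δ ≤ N.factorial * L := by nlinarith
  set h := g ^ N.factorial with hdef
  obtain ⟨j, hj, i, hi⟩ := H.exists_pow_eq A hh hL' hx
  obtain ⟨j', hj', i', hi'⟩ := H.exists_pow_eq A hh hL' hx'
  by_cases hi0 : i = 0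
  · rw [hi0, zpow_zero] at hi
    exact isOfFinOrder_iff_pow_eq_one.2 ⟨j, hj, hi⟩
  exfalso
  have e1 : b⁻¹ * h ^ (i * j') * b = h ^ (i' * j) := by
    have c := conj_pow (i := j' * j) (a := b⁻¹) (b := x)
    rw [inv_inv] at c
    rw [zpow_mul, zpow_mul, ← hi, ← hi', zpow_natCast, zpow_natCast, ← pow_mul, ← pow_mul, c,
      mul_comm j j']
  have e2 : ∀ n : ℤ, b * h ^ (i' * j * n) = h ^ (i * j' * n) * b := by
    intro n
    have c := conj_zpow (i := n) (a := b⁻¹) (b := h ^ (i * j'))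
    rw [inv_inv, e1, ← zpow_mul, ← zpow_mul] at c
    rw [c]; group
  obtain ⟨J, hJ⟩ : ∃ J : ℕ, 10 ^ 4 * (16 + 2 * N) ≤ J := ⟨_, le_rfl⟩
  have e3 : ∀ n : ℤ, len p (h ^ (i * j' * n)) ≤ (2 * J + 4) * L + 4 * L := by
    intro n
    have o := H.overlap A hg hL hκ hb hJ hbE
      (N.factorial * (i * j' * n)) (N.factorial * (i' * j * n))
    have e0 : ∀ m : ℤ, g ^ (N.factorial * m) = h ^ m := fun m => by
      rw [zpow_mul, zpow_natCast]
    rw [e0, e0, e2, gpr] at o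
    have e4 : (h ^ (i * j' * n))⁻¹ * (h ^ (i * j' * n) * b) = b := by group
    rw [e4] at o
    have t := H.len_mul_le p (h ^ (i * j' * n) * b) b⁻¹
    rw [H.len_inv, mul_inv_cancel_right] at t
    linarith
  obtain ⟨n, hn⟩ := hh.exists_large (by positivity) ((2 * J + 4) * L + 4 * L + 1)
  have hne : i * j' ≠ 0 := mul_ne_zero hi0 (by exact_mod_cast (by omega : j' ≠ 0))
  have h5 := hn ((i * j').natAbs * n) (Nat.le_mul_of_pos_left _ (Int.natAbs_pos.2 hne))
  have h6 := e3 n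
  rcases Int.natAbs_eq (i * j') with h7 | h7
  · rw [h7, ← Nat.cast_mul, zpow_natCast] at h6
    linarith
  · rw [h7, neg_mul, ← Nat.cast_mul, zpow_neg, H.len_inv, zpow_natCast] at h6
    linarith

theorem commute_of_mem_elem {h f : G} : Commute f h ↔ f * h * f⁻¹ = h := by
  rw [mul_inv_eq_iff_eq_mul]; exact Iff.rfl

/-- The elementary subgroup is a finite union of cosets of `⟨h⟩`. -/
theorem HypAct.elem_reps (H : HypAct G X δ) (A : Acyl G X δ κ N) {p : X} {h : G} {L : ℝ}
    (hh : LoxData p h L) (hL : 1000 * δ ≤ L) :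
    ∃ T : Set G, T.Finite ∧ ∀ f ∈ elem h, ∃ t ∈ T, ∃ i : ℤ, f = t * h ^ i := by
  obtain ⟨T, hT, hrep⟩ := H.cent_reps A hh hL
  by_cases hr : ∃ r : G, r * h * r⁻¹ = h⁻¹
  · obtain ⟨r, hr⟩ := hr
    refine ⟨T ∪ (fun t => r * t) '' T, hT.union (hT.image _), fun f hf => ?_⟩
    rcases hf with hf | hf
    · obtain ⟨t, ht, i, hi⟩ := hrep f (commute_of_mem_elem.2 hf)
      exact ⟨t, Or.inl ht, i, hi⟩
    · have hc : Commute (r⁻¹ * f) h := by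
        rw [commute_of_mem_elem]
        have e : r⁻¹ * f * h * (r⁻¹ * f)⁻¹ = r⁻¹ * (f * h * f⁻¹) * r := by group
        rw [e, hf, ← hr]; group
      obtain ⟨t, ht, i, hi⟩ := hrep _ hc
      exact ⟨r * t, Or.inr ⟨t, ht, rfl⟩, i, by rw [mul_assoc, ← hi]; group⟩
  · refine ⟨T, hT, fun f hf => ?_⟩
    rcases hf with hf | hf
    · exact hrep f (commute_of_mem_elem.2 hf)
    · exact absurd ⟨f, hf⟩ hr

theorem HypAct.virtuallyCyclic (H : HypAct G X δ) (A : Acyl G X δ κ N) {p : X} {h : G} {L : ℝ}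
    (hh : LoxData p h L) (hL : 1000 * δ ≤ L) (Γ : Subgroup G) (hΓ : Γ ≤ elem h) (hm : h ∈ Γ) :
    VirtuallyCyclic Γ := by
  obtain ⟨T, hT, hrep⟩ := H.elem_reps A hh hL
  have := hT.to_subtype
  refine ⟨Subgroup.zpowers ⟨h, hm⟩, inferInstance, ?_⟩
  choose t ht i hi using fun f : Γ => hrep f (hΓ f.2)
  have : Finite (Γ ⧸ Subgroup.zpowers (⟨h, hm⟩ : Γ)) := by
    refine Finite.of_injective (fun q => (⟨t q.out, ht _⟩ : T)) fun a b hab => ?_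
    rw [← Quotient.out_eq' a, ← Quotient.out_eq' b]
    refine QuotientGroup.eq.2 (Subgroup.mem_zpowers_iff.2 ⟨-i a.out + i b.out, ?_⟩)
    ext
    have e : t a.out = t b.out := congrArg Subtype.val hab
    simp only [Subgroup.coe_zpow, Subgroup.coe_mul, Subgroup.coe_inv]
    rw [hi a.out, hi b.out, e, zpow_add]; group
  exact Subgroup.finiteIndex_of_finite_quotient

theorem HypAct.isLoxodromic (H : HypAct G X δ) {p : X} {g : G} {L : ℝ}
    (hg : LoxData p g L) (hL : 0 < L) : IsLoxodromic X g := by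
  intro x
  refine lt_of_lt_of_le (by positivity : 0 < L / 100) (le_ciInf fun n => ?_)
  have hn : (0 : ℝ) < ((n : ℕ) : ℝ) := by exact_mod_cast n.pos
  rw [le_div_iff₀ hn]
  by_contra! hlt
  obtain ⟨k, hk⟩ := exists_nat_gt (2 * dist x p / (L / 100 * n - dist (g ^ (n : ℕ) • x) x))
  rw [div_lt_iff₀ (by linarith)] at hk
  have h1 : ∀ k : ℕ, len x ((g ^ (n : ℕ)) ^ k) ≤ k * dist (g ^ (n : ℕ) • x) x := by
    intro k
    induction k with
    | zero => simp [len_one]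
    | succ k ih =>
      have := H.len_mul_le x ((g ^ (n : ℕ)) ^ k) (g ^ (n : ℕ))
      have e : len x (g ^ (n : ℕ)) = dist (g ^ (n : ℕ) • x) x := rfl
      rw [pow_succ]; push_cast; linarith
  have h2 := h1 k
  have h3 := hg.low (n * k)
  rw [pow_mul] at h3
  set f := (g ^ (n : ℕ)) ^ k
  have h4 : len p f ≤ len x f + 2 * dist x p := by
    have t1 := dist_triangle (f • p) (f • x) p
    have t2 := dist_triangle (f • x) x p
    rw [H.dist_smul, dist_comm p x] at t1
    simp only [len]; linarith
  push_cast at h3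
  linarith

end Elementary

/-! ### Words with large powers of a loxodromic element -/

section Words

variable {G X : Type*} [Group G] [MetricSpace X] [MulAction G X] {δ : ℝ}

/-- The element `γ` is a power of `h` which is long compared with the overlap `a` of its axis
with the translates of that axis by elements outside `elem h`. -/
structure WordData (p : X) (h γ : G) (δ L a : ℝ) : Prop where
  pow : ∃ m : ℕ, γ = h ^ m
  small : 1000 * δ ≤ L
  turn : ∀ z ∉ elem h, len p z ≤ 4 * L → ∀ k k' : ℤ, gpr p (γ ^ k) (z * γ ^ k') ≤ a
  low : ∀ k : ℤ, |(k : ℝ)| * (len p γ - 2 * L) ≤ len p (γ ^ k)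
  nonneg : 0 ≤ a
  big : 100 * a + 1000 * L ≤ len p γ

/-- The letter `z γᵏ` coded by the pair `(z, k)`. -/
def letter (γ : G) (s : G × ℤ) : G := s.1 * γ ^ s.2

/-- A pair `(z, k)` is admissible if `z` is a short element outside `elem h` and `k ≠ 0`. -/
def Good (p : X) (h : G) (L : ℝ) (s : G × ℤ) : Prop :=
  s.1 ∉ elem h ∧ len p s.1 ≤ 4 * L ∧ s.2 ≠ 0

theorem HypAct.word_aux (H : HypAct G X δ) {p : X} {h γ : G} {L a : ℝ}
    (W : WordData p h γ δ L a) (l : List (G × ℤ)) :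
    ∀ s : G × ℤ, len p s.1 ≤ 4 * L → s.2 ≠ 0 → (∀ t ∈ l, Good p h L t) →
      (letter γ s :: l.map (letter γ)).IsChain (SmallTurn p (2 * δ)) ∧
      (|(s.2 : ℝ)| + (l.map fun t => |(t.2 : ℝ)|).sum) * (len p γ - 2 * L) - 4 * L
        - l.length * (2 * a + 20 * L) ≤ len p (letter γ s * (l.map (letter γ)).prod) := by
  have hδ := H.pos
  have hs := W.small
  have hb := W.big
  have ha := W.nonneg
  have hlow : ∀ s : G × ℤ, len p s.1 ≤ 4 * L →
      |(s.2 : ℝ)| * (len p γ - 2 * L) - 4 * L ≤ len p (letter γ s) := by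
    intro s h1
    have h2 := W.low s.2
    have h3 := H.len_mul_le p s.1⁻¹ (s.1 * γ ^ s.2)
    rw [inv_mul_cancel_left, H.len_inv] at h3
    rw [letter]; linarith
  have hlow' : ∀ s : G × ℤ, len p s.1 ≤ 4 * L → s.2 ≠ 0 →
      len p γ - 6 * L ≤ len p (letter γ s) := by
    intro s h1 h2
    have h3 := hlow s h1
    have h4 : (1 : ℝ) ≤ |(s.2 : ℝ)| := by
      have := Int.one_le_abs h2
      exact_mod_cast this
    nlinarith
  induction l with
  | nil =>
    intro s h1 h2 _
    have := hlow s h1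
    simpa using this
  | cons t l ih =>
    intro s h1 h2 h3
    obtain ⟨hE, ht1, ht2⟩ := h3 t (by simp)
    obtain ⟨hc, hl⟩ := ih t ht1 ht2 fun t' ht' => h3 t' (by simp [ht'])
    have hturn : gpr p (letter γ s)⁻¹ (letter γ t) ≤ a + 4 * L := by
      have e : (letter γ s)⁻¹ = γ ^ (-s.2) * s.1⁻¹ := by rw [letter, mul_inv_rev, zpow_neg]
      rw [e]
      have h4 := H.gpr_mul_right_le p (γ ^ (-s.2)) (letter γ t) s.1⁻¹
      have h5 := W.turn t.1 hE ht1 (-s.2) t.2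
      rw [H.len_inv] at h4
      rw [letter] at *
      linarith
    have l1 := hlow' s h1 h2
    have l2 := hlow' t ht1 ht2
    have hchain : (letter γ s :: letter γ t :: l.map (letter γ)).IsChain (SmallTurn p (2 * δ)) := by
      rw [List.isChain_cons_cons]
      exact ⟨⟨by linarith, by linarith⟩, hc⟩
    refine ⟨by simpa using hchain, ?_⟩
    have h6 := H.chain_len p (by linarith) _ _ _ hchain
    have h7 := hlow s h1
    simp only [List.map_cons, List.sum_cons, List.length_cons, List.prod_cons] at *
    push_cast
    linarith

/-- A word with at most six syllables and total exponent at least six is longer than the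
element `w` built below. -/
theorem HypAct.word_long (H : HypAct G X δ) {p : X} {h γ : G} {L a : ℝ}
    (W : WordData p h γ δ L a) (k : ℤ) (hk : k ≠ 0) (l : List (G × ℤ))
    (hl : ∀ t ∈ l, Good p h L t) (h5 : l.length ≤ 5)
    (h6 : 6 ≤ |(k : ℝ)| + (l.map fun t => |(t.2 : ℝ)|).sum) {y : G}
    (hy : y = γ ^ k * (l.map (letter γ)).prod) : 5 * len p γ + 20 * L ≤ len p y := by
  have hδ := H.pos
  have hs := W.small
  have hb := W.big
  have ha := W.nonneg
  have h1 := (H.word_aux W l (1, k) (by simp only [len_one]; linarith) hk hl).2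
  have e : letter γ (1, k) = γ ^ k := by simp [letter]
  rw [e, ← hy] at h1
  have h7 : (l.length : ℝ) ≤ 5 := by exact_mod_cast h5
  have h8 : (l.length : ℝ) * (2 * a + 20 * L) ≤ 5 * (2 * a + 20 * L) := by gcongr; linarith
  have h9 := mul_le_mul_of_nonneg_right h6 (by linarith : 0 ≤ len p γ - 2 * L)
  dsimp only at h1
  linarith

/-- The long element whose conjugates form the reduced set. -/
def longWord (γ b : G) : G := γ * b * γ ^ 2 * b⁻¹ * γ ^ 2

theorem WordData.commute {p : X} {h γ x : G} {L a : ℝ} (W : WordData p h γ δ L a)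
    (hx : x * h * x⁻¹ = h) (k : ℤ) : x * γ ^ k = γ ^ k * x := by
  obtain ⟨m, rfl⟩ := W.pow
  rw [← mul_inv_eq_iff_eq_mul, ← conj_zpow, ← conj_pow, hx]

theorem WordData.invert {p : X} {h γ x : G} {L a : ℝ} (W : WordData p h γ δ L a)
    (hx : x * h * x⁻¹ = h⁻¹) (k : ℤ) : x * γ ^ k = γ ^ (-k) * x := by
  obtain ⟨m, rfl⟩ := W.pow
  rw [← mul_inv_eq_iff_eq_mul, ← conj_zpow, ← conj_pow, hx, inv_pow, inv_zpow']

section Cases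

variable {p : X} {h γ b x : G} {L a : ℝ}

/-- The short elements used below as connectors between powers of `γ`. -/
theorem HypAct.connectors (H : HypAct G X δ) (W : WordData p h γ δ L a) (hb : b ∉ elem h)
    (hbL : len p b ≤ L) (hx : len p x ≤ 2 * L) :
    (∀ k : ℤ, k ≠ 0 → Good p h L (b, k)) ∧ (∀ k : ℤ, k ≠ 0 → Good p h L (b⁻¹, k)) ∧
    (x ∈ elem h → ∀ k : ℤ, k ≠ 0 → Good p h L (x * b, k)) ∧
    (x ∈ elem h → ∀ k : ℤ, k ≠ 0 → Good p h L (b⁻¹ * x, k)) ∧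
    (b⁻¹ * x * b ∉ elem h → ∀ k : ℤ, k ≠ 0 → Good p h L (b⁻¹ * x * b, k)) ∧
    (x ∉ elem h → ∀ k : ℤ, k ≠ 0 → Good p h L (x, k)) := by
  have hL0 : 0 ≤ L := by have := H.pos; have := W.small; linarith
  have hb' : b⁻¹ ∉ elem h := fun hh => hb (by simpa using inv_mem hh)
  have hxb := H.len_mul_le p x b
  have hbx := H.len_mul_le p b⁻¹ x
  have hbxb := H.len_mul_le p (b⁻¹ * x) b
  rw [H.len_inv] at hbx
  refine ⟨fun k hk => ⟨hb, ?_, hk⟩, fun k hk => ⟨hb', ?_, hk⟩,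
    fun hxE k hk => ⟨fun hh => hb ((Subgroup.mul_mem_cancel_left _ hxE).1 hh), ?_, hk⟩,
    fun hxE k hk => ⟨fun hh => hb' ((Subgroup.mul_mem_cancel_right _ hxE).1 hh), ?_, hk⟩,
    fun hv k hk => ⟨hv, ?_, hk⟩, fun hxE k hk => ⟨hxE, ?_, hk⟩⟩ <;>
  dsimp only <;> (try rw [H.len_inv]) <;> linarith

/-- The element `w⁻¹ x w` is long, unless `x` centralizes `h` and `b h b⁻¹`. -/
theorem HypAct.long_inv_mul (H : HypAct G X δ) (W : WordData p h γ δ L a) (hb : b ∉ elem h)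
    (hbL : len p b ≤ L) (hx : len p x ≤ 2 * L)
    (hC : ¬ (x * h * x⁻¹ = h ∧ b⁻¹ * x * b * h * (b⁻¹ * x * b)⁻¹ = h)) :
    5 * len p γ + 20 * L ≤ len p ((longWord γ b)⁻¹ * x * longWord γ b) := by
  obtain ⟨gb, gb', gxb, gbx, gv, gx⟩ := H.connectors W hb hbL hx
  have e0 : (longWord γ b)⁻¹ * x * longWord γ b = γ ^ (-2 : ℤ) * b * γ ^ (-2 : ℤ) * b⁻¹ *
      γ ^ (-1 : ℤ) * (x * γ ^ (1 : ℤ)) * b * γ ^ 2 * b⁻¹ * γ ^ 2 := by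
    rw [longWord]; group
  by_cases hxE : x ∈ elem h
  · have gxb := gxb hxE
    have gbx := gbx hxE
    rcases hxE with hx1 | hx1
    · rw [W.commute hx1] at e0
      by_cases hv : b⁻¹ * x * b ∈ elem h
      · rcases hv with hv1 | hv1
        · exact absurd ⟨hx1, hv1⟩ hC
        · refine H.word_long W (-2) (by norm_num) [(b, -4), (b⁻¹ * x, 2)]
            (by simp [gb, gbx]) (by simp) (by norm_num) ?_
          have e1 := W.invert hv1 2
          have e2 : γ ^ (-2 : ℤ) * b * γ ^ (-2 : ℤ) * b⁻¹ *
              γ ^ (-1 : ℤ) * (γ ^ (1 : ℤ) * x) * b * γ ^ 2 * b⁻¹ * γ ^ 2 = γ ^ (-2 : ℤ) * b *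
              γ ^ (-2 : ℤ) * (b⁻¹ * x * b * γ ^ (2 : ℤ)) * b⁻¹ * γ ^ 2 := by group
          rw [e0, e2, e1]
          simp only [letter, List.map_cons, List.map_nil, List.prod_cons, List.prod_nil]
          group
      · have gv := gv hv
        refine H.word_long W (-2) (by norm_num) [(b, -2), (b⁻¹ * x * b, 2), (b⁻¹, 2)]
          (by simp [gb, gb', gv]) (by simp) (by norm_num) ?_
        rw [e0]
        simp only [letter, List.map_cons, List.map_nil, List.prod_cons, List.prod_nil]
        group
    · refine H.word_long W (-2) (by norm_num) [(b, -2), (b⁻¹, -2), (x * b, 2), (b⁻¹, 2)]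
        (by simp [gb, gb', gxb]) (by simp) (by norm_num) ?_
      rw [e0, W.invert hx1]
      simp only [letter, List.map_cons, List.map_nil, List.prod_cons, List.prod_nil]
      group
  · have gx := gx hxE
    refine H.word_long W (-2) (by norm_num) [(b, -2), (b⁻¹, -1), (x, 1), (b, 2), (b⁻¹, 2)]
      (by simp [gb, gb', gx]) (by simp) (by norm_num) ?_
    simp only [letter, longWord, List.map_cons, List.map_nil, List.prod_cons, List.prod_nil]
    group

/-- The element `w x w⁻¹` is long, unless `x` centralizes `h` and `b h b⁻¹`. -/
theorem HypAct.long_mul_inv (H : HypAct G X δ) (W : WordData p h γ δ L a) (hb : b ∉ elem h)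
    (hbL : len p b ≤ L) (hx : len p x ≤ 2 * L)
    (hC : ¬ (x * h * x⁻¹ = h ∧ b⁻¹ * x * b * h * (b⁻¹ * x * b)⁻¹ = h)) :
    5 * len p γ + 20 * L ≤ len p (longWord γ b * x * (longWord γ b)⁻¹) := by
  obtain ⟨gb, gb', gxb, gbx, gv, gx⟩ := H.connectors W hb hbL hx
  have e0 : longWord γ b * x * (longWord γ b)⁻¹ = γ * b * γ ^ 2 * b⁻¹ * γ ^ 2 *
      (x * γ ^ (-2 : ℤ)) * b * γ ^ (-2 : ℤ) * b⁻¹ * γ⁻¹ := by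
    rw [longWord]; group
  by_cases hxE : x ∈ elem h
  · have gxb := gxb hxE
    have gbx := gbx hxE
    rcases hxE with hx1 | hx1
    · rw [W.commute hx1] at e0
      by_cases hv : b⁻¹ * x * b ∈ elem h
      · rcases hv with hv1 | hv1
        · exact absurd ⟨hx1, hv1⟩ hC
        · refine H.word_long W 1 (by norm_num) [(b, 4), (b⁻¹ * x, -1)]
            (by simp [gb, gbx]) (by simp) (by norm_num) ?_
          have e1 := W.invert hv1 (-2)
          have e2 : γ * b * γ ^ 2 * b⁻¹ * γ ^ 2 * (γ ^ (-2 : ℤ) * x) * b * γ ^ (-2 : ℤ) * b⁻¹ * γ⁻¹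
              = γ * b * γ ^ 2 * (b⁻¹ * x * b * γ ^ (-2 : ℤ)) * b⁻¹ * γ⁻¹ := by group
          rw [e0, e2, e1]
          simp only [letter, List.map_cons, List.map_nil, List.prod_cons, List.prod_nil]
          group
      · have gv := gv hv
        refine H.word_long W 1 (by norm_num) [(b, 2), (b⁻¹ * x * b, -2), (b⁻¹, -1)]
          (by simp [gb, gb', gv]) (by simp) (by norm_num) ?_
        rw [e0]
        simp only [letter, List.map_cons, List.map_nil, List.prod_cons, List.prod_nil]
        group
    · refine H.word_long W 1 (by norm_num) [(b, 2), (b⁻¹, 4), (x * b, -2), (b⁻¹, -1)]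
        (by simp [gb, gb', gxb]) (by simp) (by norm_num) ?_
      rw [e0, W.invert hx1]
      simp only [letter, List.map_cons, List.map_nil, List.prod_cons, List.prod_nil]
      group
  · have gx := gx hxE
    refine H.word_long W 1 (by norm_num) [(b, 2), (b⁻¹, 2), (x, -2), (b, -2), (b⁻¹, -1)]
      (by simp [gb, gb', gx]) (by simp) (by norm_num) ?_
    simp only [letter, longWord, List.map_cons, List.map_nil, List.prod_cons, List.prod_nil]
    group

/-- The element `w x w` is always long. -/
theorem HypAct.long_mul_mul (H : HypAct G X δ) (W : WordData p h γ δ L a) (hb : b ∉ elem h)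
    (hbL : len p b ≤ L) (hx : len p x ≤ 2 * L) :
    5 * len p γ + 20 * L ≤ len p (longWord γ b * x * longWord γ b) := by
  obtain ⟨gb, gb', gxb, -, -, gx⟩ := H.connectors W hb hbL hx
  have e0 : longWord γ b * x * longWord γ b = γ * b * γ ^ 2 * b⁻¹ * γ ^ 2 *
      (x * γ ^ (1 : ℤ)) * b * γ ^ 2 * b⁻¹ * γ ^ 2 := by
    rw [longWord]; group
  by_cases hxE : x ∈ elem h
  · have gxb := gxb hxE
    rcases hxE with hx1 | hx1
    · refine H.word_long W 1 (by norm_num) [(b, 2), (b⁻¹, 3), (x * b, 2), (b⁻¹, 2)]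
        (by simp [gb, gb', gxb]) (by simp) (by norm_num) ?_
      rw [e0, W.commute hx1]
      simp only [letter, List.map_cons, List.map_nil, List.prod_cons, List.prod_nil]
      group
    · refine H.word_long W 1 (by norm_num) [(b, 2), (b⁻¹, 1), (x * b, 2), (b⁻¹, 2)]
        (by simp [gb, gb', gxb]) (by simp) (by norm_num) ?_
      rw [e0, W.invert hx1]
      simp only [letter, List.map_cons, List.map_nil, List.prod_cons, List.prod_nil]
      group
  · have gx := gx hxE
    refine H.word_long W 1 (by norm_num) [(b, 2), (b⁻¹, 2), (x, 1), (b, 2), (b⁻¹, 2)]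
      (by simp [gb, gb', gx]) (by simp) (by norm_num) ?_
    simp only [letter, longWord, List.map_cons, List.map_nil, List.prod_cons, List.prod_nil]
    group

theorem HypAct.len_longWord_le (H : HypAct G X δ) (hbL : len p b ≤ L) :
    len p (longWord γ b) ≤ 5 * len p γ + 2 * L := by
  have h1 := H.len_mul_le p (γ * b * γ ^ 2 * b⁻¹) (γ ^ 2)
  have h2 := H.len_mul_le p (γ * b * γ ^ 2) b⁻¹
  have h3 := H.len_mul_le p (γ * b) (γ ^ 2)
  have h4 := H.len_mul_le p γ b
  have h5 := H.len_mul_le p γ γ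
  rw [H.len_inv] at h2
  rw [pow_two] at *
  rw [longWord, pow_two]
  linarith

end Cases

/-- A set of conjugates `u w u⁻¹`, by elements `u` which are pairwise distinct modulo the common
centralizer of `h` and `b h b⁻¹`, is reduced. -/
theorem HypAct.reduced_conj (H : HypAct G X δ) {p : X} {h γ b : G} {L a : ℝ}
    (W : WordData p h γ δ L a) (hb : b ∉ elem h) (hbL : len p b ≤ L) {R : Set G}
    (hR : ∀ u ∈ R, len p u ≤ L)
    (hC : ∀ u ∈ R, ∀ u' ∈ R, u ≠ u' → u⁻¹ * u' ∉ Subgroup.centralizer {h, b * h * b⁻¹}) :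
    ReducedAt δ (200 * δ) ((fun u => u * longWord γ b * u⁻¹) '' R) p ∧
      Set.InjOn (fun u => u * longWord γ b * u⁻¹) R := by
  have hδ := H.pos
  have hs := W.small
  set w := longWord γ b with hw
  have hwl : len p w ≤ 5 * len p γ + 2 * L := H.len_longWord_le hbL
  have hC' : ∀ u ∈ R, ∀ u' ∈ R, u ≠ u' → ¬ (u⁻¹ * u' * h * (u⁻¹ * u')⁻¹ = h ∧
      b⁻¹ * (u⁻¹ * u') * b * h * (b⁻¹ * (u⁻¹ * u') * b)⁻¹ = h) := by
    intro u hu u' hu' hne hh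
    apply hC u hu u' hu' hne
    rw [Subgroup.mem_centralizer_iff]
    set x := u⁻¹ * u' with hx
    rintro z (rfl | rfl)
    · exact (mul_inv_eq_iff_eq_mul.1 hh.1).symm
    · have h2 := mul_inv_eq_iff_eq_mul.1 hh.2
      have : b * h * b⁻¹ * x = b * (h * (b⁻¹ * x * b)) * b⁻¹ := by group
      rw [this, ← h2]; group
  have hx : ∀ u ∈ R, ∀ u' ∈ R, len p (u⁻¹ * u') ≤ 2 * L := by
    intro u hu u' hu'
    have h1 := H.len_mul_le p u⁻¹ u'
    have h2 := hR u hu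
    have h3 := hR u' hu'
    rw [H.len_inv] at h1; linarith
  have hup : ∀ u ∈ R, len p (u * w * u⁻¹) ≤ 5 * len p γ + 4 * L := by
    intro u hu
    have h1 := H.len_mul_le p (u * w) u⁻¹
    have h2 := H.len_mul_le p u w
    have h3 := hR u hu
    rw [H.len_inv] at h1; linarith
  -- removing the outer conjugating elements costs at most `2L`
  have strip : ∀ u ∈ R, ∀ u' ∈ R, ∀ y : G, len p y - 2 * L ≤ len p (u * y * u'⁻¹) := by
    intro u hu u' hu' y
    have h1 := H.len_mul_le p (u⁻¹ * (u * y * u'⁻¹)) u'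
    have h2 := H.len_mul_le p u⁻¹ (u * y * u'⁻¹)
    have h3 := hR u hu
    have h4 := hR u' hu'
    have e : u⁻¹ * (u * y * u'⁻¹) * u' = y := by group
    rw [e] at h1
    rw [H.len_inv] at h2; linarith
  have pp : ∀ u ∈ R, ∀ u' ∈ R, u ≠ u' →
      5 * len p γ + 18 * L ≤ len p ((u * w * u⁻¹)⁻¹ * (u' * w * u'⁻¹)) := by
    intro u hu u' hu' hne
    have h1 := H.long_inv_mul W hb hbL (hx u hu u' hu') (hC' u hu u' hu' hne)
    have h2 := strip u hu u' hu' (w⁻¹ * (u⁻¹ * u') * w)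
    have e : u * (w⁻¹ * (u⁻¹ * u') * w) * u'⁻¹ = (u * w * u⁻¹)⁻¹ * (u' * w * u'⁻¹) := by group
    rw [e] at h2; linarith
  have mm : ∀ u ∈ R, ∀ u' ∈ R, u ≠ u' →
      5 * len p γ + 18 * L ≤ len p ((u * w * u⁻¹) * (u' * w * u'⁻¹)⁻¹) := by
    intro u hu u' hu' hne
    have h1 := H.long_mul_inv W hb hbL (hx u hu u' hu') (hC' u hu u' hu' hne)
    have h2 := strip u hu u' hu' (w * (u⁻¹ * u') * w⁻¹)
    have e : u * (w * (u⁻¹ * u') * w⁻¹) * u'⁻¹ = (u * w * u⁻¹) * (u' * w * u'⁻¹)⁻¹ := by group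
    rw [e] at h2; linarith
  have mp : ∀ u ∈ R, ∀ u' ∈ R,
      5 * len p γ + 18 * L ≤ len p ((u * w * u⁻¹) * (u' * w * u'⁻¹)) := by
    intro u hu u' hu'
    have h1 := H.long_mul_mul W hb hbL (hx u hu u' hu')
    have h2 := strip u hu u' hu' (w * (u⁻¹ * u') * w)
    have e : u * (w * (u⁻¹ * u') * w) * u'⁻¹ = (u * w * u⁻¹) * (u' * w * u'⁻¹) := by group
    rw [e] at h2; linarith
  have hγ : 0 ≤ len p γ := len_nonneg _ _
  have fin : ∀ s t : G, len p s ≤ 5 * len p γ + 4 * L → len p t ≤ 5 * len p γ + 4 * L →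
      5 * len p γ + 18 * L ≤ len p (s⁻¹ * t) →
      gromov (s • p) (t • p) p < min (dist (s • p) p) (dist (t • p) p) / 2 - 200 * δ - 50 * δ := by
    intro s t h1 h2 h3
    rw [H.gromov_eq, gpr]
    change _ < min (len p s) (len p t) / 2 - 200 * δ - 50 * δ
    rcases min_choice (len p s) (len p t) with h4 | h4 <;> rw [h4] <;> linarith
  refine ⟨⟨?_, ?_⟩, ?_⟩
  · rw [Set.eq_empty_iff_forall_notMem]
    rintro s ⟨⟨u, hu, rfl⟩, hs'⟩
    obtain ⟨u', hu', he⟩ := Set.mem_inv.1 hs'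
    have h1 := mp u hu u' hu'
    dsimp only at he
    rw [he, mul_inv_cancel, len_one] at h1
    linarith
  · intro s hs' t ht' hne
    rcases hs' with ⟨u, hu, rfl⟩ | hs' <;> rcases ht' with ⟨u', hu', rfl⟩ | ht'
    · exact fin _ _ (hup u hu) (hup u' hu') (pp u hu u' hu' fun hh => hne (by rw [hh]))
    · obtain ⟨u', hu', he⟩ := Set.mem_inv.1 ht'
      obtain rfl : t = (u' * w * u'⁻¹)⁻¹ := by
        rw [← inv_eq_iff_eq_inv]; exact he.symm
      refine fin _ _ (hup u hu) (by rw [H.len_inv]; exact hup u' hu') ?_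
      rw [← mul_inv_rev, H.len_inv]
      exact mp u' hu' u hu
    · obtain ⟨u, hu, he⟩ := Set.mem_inv.1 hs'
      obtain rfl : s = (u * w * u⁻¹)⁻¹ := by
        rw [← inv_eq_iff_eq_inv]; exact he.symm
      refine fin _ _ (by rw [H.len_inv]; exact hup u hu) (hup u' hu') ?_
      rw [inv_inv]
      exact mp u hu u' hu'
    · obtain ⟨u, hu, he⟩ := Set.mem_inv.1 hs'
      obtain ⟨u', hu', he'⟩ := Set.mem_inv.1 ht'
      obtain rfl : s = (u * w * u⁻¹)⁻¹ := by
        rw [← inv_eq_iff_eq_inv]; exact he.symm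
      obtain rfl : t = (u' * w * u'⁻¹)⁻¹ := by
        rw [← inv_eq_iff_eq_inv]; exact he'.symm
      refine fin _ _ (by rw [H.len_inv]; exact hup u hu) (by rw [H.len_inv]; exact hup u' hu') ?_
      rw [inv_inv]
      exact mm u hu u' hu' fun hh => hne (by rw [hh])
  · intro u hu u' hu' he
    by_contra hne
    have h1 := pp u hu u' hu' hne
    dsimp only at he
    rw [he, inv_mul_cancel, len_one] at h1
    linarith

end Words

/-! ### Finding a loxodromic element in a short product -/

section Find

variable {G X : Type*} [Group G] [MetricSpace X] [MulAction G X] {δ : ℝ}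

/-- If `s` and `t` are almost involutive but point in different directions, then `t s` is
loxodromic with a small turn. -/
theorem HypAct.prod_small_turn (H : HypAct G X δ) {p : X} {s t : G} {L : ℝ} (hL : 10 ^ 4 * δ ≤ L)
    (hs : len p s = L) (ht : L / 2 < len p t)
    (hss : len p s / 2 - L / 100 < gpr p s⁻¹ s) (htt : len p t / 2 - L / 100 < gpr p t⁻¹ t)
    (hts : gpr p t s < 11 / 100 * L) :
    gpr p (t * s)⁻¹ (t * s) ≤ len p (t * s) / 2 - L / 100 := by
  have hδ := H.pos
  have c1 : gpr p t⁻¹ s ≤ 11 / 100 * L + δ := by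
    have := H.gpr_comm p t t⁻¹
    rcases H.len_hyp p t t⁻¹ s with h | h <;> linarith
  have c2 : gpr p s⁻¹ t ≤ 11 / 100 * L + δ := by
    have := H.gpr_comm p t s
    have := H.gpr_comm p s s⁻¹
    rcases H.len_hyp p s s⁻¹ t with h | h <;> linarith
  have hα : δ < 2 * δ := by linarith
  have t1 : SmallTurn p (2 * δ) t s := ⟨by linarith, by linarith⟩
  have t2 : SmallTurn p (2 * δ) s t := ⟨by linarith, by linarith⟩
  have k3 := H.chain_len p hα [] t s (by simp [t1])
  have k2 := H.chain_len p hα [s] s t (by simp [t1, t2])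
  have k1 := H.chain_len p hα [t, s] t s (by simp [t1, t2])
  simp only [List.prod_cons, List.prod_nil, mul_one] at k1 k2 k3
  have e := H.len_mul p t s
  have e2 : t * s * (t * s) = t * (s * (t * s)) := by group
  rw [gpr, H.len_inv, inv_inv, e2]
  linarith

/-- A short product of elements of `U` is loxodromic: otherwise all of `U` would move the point
at distance `L/10` of `p` on `[p, sp]` by much less than `L`. -/
theorem HypAct.exists_lox (H : HypAct G X δ) {p : X} {U : Set G} {s : G} {L : ℝ}
    (hL : 10 ^ 4 * δ ≤ L) (hU : ∀ t ∈ U, t⁻¹ ∈ U) (hsU : s ∈ U) (hs : len p s = L)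
    (hle : ∀ t ∈ U, len p t ≤ L) (hmin : ∀ m : X, ∃ t ∈ U, L - δ < dist (t • m) m) :
    ∃ g : G, (g ∈ U ∨ ∃ t ∈ U, ∃ t' ∈ U, g = t * t') ∧ LoxData p g L := by
  have hδ := H.pos
  by_contra! hcon
  have h1 : ∀ t ∈ U, len p t / 2 - L / 100 < gpr p t⁻¹ t := by
    intro t ht
    by_contra! h
    exact hcon t (Or.inl ht) (H.loxData p (by linarith) (by linarith [hle t ht]) h)
  have h2 : ∀ t ∈ U, ∀ t' ∈ U, len p (t * t') / 2 - L / 100 < gpr p (t * t')⁻¹ (t * t') := by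
    intro t ht t' ht'
    by_contra! h
    exact hcon _ (Or.inr ⟨t, ht, t', ht', rfl⟩) (H.loxData p (by linarith)
      (by linarith [hle t ht, hle t' ht', H.len_mul_le p t t']) h)
  have h3 : ∀ t ∈ U, L / 2 < len p t → 11 / 100 * L ≤ gpr p t s := by
    intro t ht hlt
    by_contra! h
    exact absurd (H.prod_small_turn hL hs hlt (h1 s hsU) (h1 t ht) h) (h2 t ht s hsU).not_ge
  obtain ⟨f, f0, f1, hf⟩ := H.geod p (s • p)
  rw [dist_pow, hs] at f1 hf
  have m1 := hf 0 ⟨le_rfl, by linarith⟩ (L / 10) ⟨by linarith, by linarith⟩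
  have m2 := hf L ⟨by linarith, le_rfl⟩ (L / 10) ⟨by linarith, by linarith⟩
  rw [f0, abs_of_nonpos (by linarith)] at m1
  rw [f1, abs_of_nonneg (by linarith)] at m2
  set m := f (L / 10)
  have close : ∀ t : G, 11 / 100 * L ≤ gpr p t s → dist (t • p) m ≤ len p t - L / 10 + 2 * δ := by
    intro t ht
    have h4 := H.hyp (t • p) (s • p) m p
    rw [H.gromov_eq] at h4
    have h5 : gromov (s • p) m p = L / 10 := by
      have : dist (s • p) p = L := hs
      rw [gromov, dist_comm m p, m1, m2, this]; ring
    rw [h5] at h4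
    have h6 : gromov (t • p) m p = (len p t + L / 10 - dist (t • p) m) / 2 := by
      rw [gromov, dist_comm m p, m1, len]; ring
    rw [h6] at h4
    have := le_min (by linarith : L / 10 ≤ gpr p t s) (le_refl (L / 10))
    linarith
  obtain ⟨t, ht, hlt⟩ := hmin m
  rcases le_or_gt (len p t) (L / 2) with h4 | h4
  · have a1 := dist_triangle (t • m) (t • p) m
    have a2 := dist_triangle (t • p) p m
    rw [H.dist_smul, dist_comm m p] at a1
    have : dist (t • p) p = len p t := rfl
    linarith
  · have b1 := close t (h3 t ht h4)
    have b2 := close t⁻¹ (h3 t⁻¹ (hU t ht) (by rwa [H.len_inv]))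
    rw [H.dist_smul_left, inv_inv, H.len_inv] at b2
    have b3 := H.four (t • m) p m (t • p)
    have e1 : dist p (t • p) = len p t := dist_pow p t
    have e2 : dist (t • m) (t • p) = L / 10 := by rw [H.dist_smul, dist_comm]; linarith
    have e3 : dist m (t • p) = dist (t • p) m := dist_comm _ _
    have e4 : dist (t • m) p = dist p (t • m) := dist_comm _ _
    have := hle t ht
    rw [e1, e2, e3, e4] at b3
    rcases b3 with b3 | b3 <;> linarith

end Find

/-! ### Powers of symmetric sets and growth -/

section Growth

variable {G : Type*} [Group G]

theorem pow_subset_pow_add {U : Set G} (hne : U.Nonempty) (hU : ∀ t ∈ U, t⁻¹ ∈ U) (k j : ℕ) :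
    U ^ k ⊆ U ^ (k + 2 * j) := by
  obtain ⟨t, ht⟩ := hne
  have h1 : (1 : G) ∈ U ^ 2 := by
    rw [pow_two]
    exact ⟨t, ht, t⁻¹, hU t ht, by simp⟩
  intro x hx
  rw [pow_add, pow_mul]
  have h2 : (1 : G) ∈ (U ^ 2) ^ j := by
    have := Set.pow_mem_pow h1 (n := j)
    simpa using this
  exact ⟨x, hx, 1, h2, by simp⟩

theorem pow_finite {U : Set G} (hf : U.Finite) (n : ℕ) : (U ^ n).Finite := by
  induction n with
  | zero => simp
  | succ n ih => rw [pow_succ]; exact ih.mul hf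

theorem ncard_pow_le {U : Set G} (n : ℕ) :
    (U ^ n).ncard ≤ U.ncard ^ n := by
  induction n with
  | zero => simp [← Set.singleton_one]
  | succ n ih =>
    rw [pow_succ, pow_succ]
    refine le_trans ?_ (Nat.mul_le_mul_right _ ih)
    exact Set.natCard_mul_le

theorem exists_list_of_mem_pow {S : Set G} (n : ℕ) :
    ∀ x ∈ S ^ n, ∃ l : List G, (∀ a ∈ l, a ∈ S) ∧ l.prod = x := by
  induction n with
  | zero => intro x hx; exact ⟨[], by simp, by simpa using hx.symm⟩
  | succ n ih =>
    intro x hx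
    rw [pow_succ'] at hx
    obtain ⟨s, hs, y, hy, rfl⟩ := hx
    obtain ⟨l, hl, rfl⟩ := ih y hy
    exact ⟨s :: l, by simpa using ⟨hs, hl⟩, by simp⟩

/-- If `S` generates exponentially many elements freely (as a semigroup) inside a power of `U`,
then the growth rate of `U` is bounded below accordingly. -/
theorem growthRate_ge {U S : Set G} (hf : U.Finite) (hne : U.Nonempty) {c : ℕ} (hc : 0 < c)
    (hS : S ⊆ U ^ c) (hfree : ∀ n : ℕ, (S ^ n).ncard = S.ncard ^ n) :
    Real.log S.ncard / c ≤ growthRate U := by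
  have hUpos : 0 < U.ncard := (Set.ncard_pos hf).2 hne
  have hbdd : ∀ n : ℕ, Real.log ((U ^ n).ncard : ℝ) / (n : ℝ) ≤ Real.log U.ncard := by
    intro n
    rcases Nat.eq_zero_or_pos n with rfl | hn
    · simpa using Real.log_natCast_nonneg _
    · have hn' : (0 : ℝ) < n := by exact_mod_cast hn
      rw [div_le_iff₀ hn']
      have h1 : ((U ^ n).ncard : ℝ) ≤ (U.ncard : ℝ) ^ n := by exact_mod_cast ncard_pow_le n
      have h2 : 0 < (U ^ n).ncard := (Set.ncard_pos (pow_finite hf n)).2 hne.pow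
      calc Real.log ((U ^ n).ncard : ℝ) ≤ Real.log ((U.ncard : ℝ) ^ n) :=
            Real.log_le_log (by exact_mod_cast h2) h1
        _ = Real.log U.ncard * n := by rw [Real.log_pow]; ring
  unfold growthRate
  apply le_limsup_of_frequently_le
  · rw [Filter.frequently_atTop]
    intro a
    refine ⟨c * (a + 1), by nlinarith, ?_⟩
    have hn' : (0 : ℝ) < (c * (a + 1) : ℕ) := by exact_mod_cast Nat.mul_pos hc (Nat.succ_pos a)
    have hc' : (0 : ℝ) < c := by exact_mod_cast hc
    rw [div_le_div_iff₀ hc' hn']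
    have h3 : S ^ (a + 1) ⊆ U ^ (c * (a + 1)) := by
      rw [pow_mul]; exact Set.pow_subset_pow_left hS
    have h4 := Set.ncard_le_ncard h3 (pow_finite hf _)
    rw [hfree] at h4
    rcases Nat.eq_zero_or_pos S.ncard with h0 | h0
    · rw [h0]
      simpa using mul_nonneg (Real.log_natCast_nonneg _) hc'.le
    · have h5 : Real.log ((S.ncard : ℝ) ^ (a + 1)) ≤
          Real.log ((U ^ (c * (a + 1))).ncard : ℝ) :=
        Real.log_le_log (by positivity) (by exact_mod_cast h4)
      rw [Real.log_pow] at h5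
      push_cast at h5 ⊢
      nlinarith
  · exact ⟨Real.log U.ncard, by simpa using ⟨0, fun n _ => hbdd n⟩⟩

end Growth

/-! ### Reduced sets are free -/

section Free

variable {G X : Type*} [Group G] [MetricSpace X] [MulAction G X] {δ : ℝ}

theorem ReducedAt.len_pos (H : HypAct G X δ) {S : Set G} {p : X}
    (hS : ReducedAt δ (200 * δ) S p) {a : G} (ha : a ∈ S ∪ S⁻¹) : 0 < len p a := by
  have hne : a ≠ a⁻¹ := by
    intro h
    have : a ∈ S ∩ S⁻¹ := by
      rcases ha with ha | ha
      · exact ⟨ha, by rw [Set.mem_inv, ← h]; exact ha⟩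
      · exact ⟨by rw [h]; exact ha, ha⟩
    rw [hS.1] at this; exact this
  have ha' : a⁻¹ ∈ S ∪ S⁻¹ := by
    rcases ha with ha | ha
    · right; simpa using ha
    · left; exact ha
  have h1 := hS.2 a ha _ ha' hne
  have h2 : 0 ≤ gromov (a • p) (a⁻¹ • p) p := by
    have := dist_triangle_right (a • p) (a⁻¹ • p) p
    unfold gromov; linarith
  have h3 := min_le_left (dist (a • p) p) (dist (a⁻¹ • p) p)
  have := H.pos
  unfold len; linarith

theorem ReducedAt.smallTurn (H : HypAct G X δ) {S : Set G} {p : X}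
    (hS : ReducedAt δ (200 * δ) S p) {a b : G} (ha : a ∈ S ∪ S⁻¹) (hb : b ∈ S ∪ S⁻¹)
    (hab : a⁻¹ ≠ b) : SmallTurn p (2 * δ) a b := by
  have ha' : a⁻¹ ∈ S ∪ S⁻¹ := by
    rcases ha with ha | ha
    · right; simpa using ha
    · left; exact ha
  have h1 := hS.2 _ ha' b hb hab
  rw [H.gromov_eq] at h1
  have h3 := min_le_left (dist (a⁻¹ • p) p) (dist (b • p) p)
  have h4 := min_le_right (dist (a⁻¹ • p) p) (dist (b • p) p)
  have h5 : dist (a⁻¹ • p) p = len p a := H.len_inv p a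
  have h6 : dist (b • p) p = len p b := rfl
  have := H.pos
  constructor <;> linarith

theorem ReducedAt.prod_ne_one (H : HypAct G X δ) {S : Set G} {p : X}
    (hS : ReducedAt δ (200 * δ) S p) {l : List G} (hl : l ≠ [])
    (hmem : ∀ a ∈ l, a ∈ S ∪ S⁻¹) (hchain : l.IsChain fun a b => a⁻¹ ≠ b) : l.prod ≠ 1 := by
  obtain ⟨a, l, rfl⟩ := List.exists_cons_of_ne_nil hl
  have hδ : δ < 2 * δ := by linarith [H.pos]
  have h1 : (a :: l).IsChain (SmallTurn p (2 * δ)) :=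
    hchain.imp_of_mem_imp fun x y hx hy hxy => hS.smallTurn H (hmem x hx) (hmem y hy) hxy
  have h2 := H.chain_pos p hδ l a h1 (hS.len_pos H (hmem a (by simp)))
  intro h
  rw [h, len_one] at h2
  exact lt_irrefl _ h2

/-- A reduced set freely generates a semigroup. If two positive words with different first
letters had the same value, then cancelling would produce a nontrivial reduced word equal
to `1`. -/
theorem ReducedAt.ncard_pow (H : HypAct G X δ) {S : Set G} {p : X}
    (hS : ReducedAt δ (200 * δ) S p) (n : ℕ) : (S ^ n).ncard = S.ncard ^ n := by
  have hpos : ∀ a ∈ S, ∀ b ∈ S, a⁻¹ ≠ b := by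
    rintro a ha b hb rfl
    have : a ∈ S ∩ S⁻¹ := ⟨ha, hb⟩
    rw [hS.1] at this; exact this
  have hneg : ∀ a ∈ S⁻¹, ∀ b ∈ S⁻¹, a⁻¹ ≠ b := by
    rintro a ha b hb rfl
    have : a⁻¹ ∈ S ∩ S⁻¹ := ⟨ha, hb⟩
    rw [hS.1] at this; exact this
  have chainOf : ∀ (T : Set G) (_ : ∀ a ∈ T, ∀ b ∈ T, a⁻¹ ≠ b) (l : List G),
      (∀ a ∈ l, a ∈ T) → l.IsChain fun a b => a⁻¹ ≠ b := by
    intro T hT l hl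
    refine List.Pairwise.isChain ?_
    exact List.pairwise_of_forall_mem_list fun a ha b hb => hT a (hl a ha) b (hl b hb)
  induction n with
  | zero => simp [← Set.singleton_one]
  | succ n ih =>
    rw [pow_succ', pow_succ', ← ih, ← Set.ncard_prod]
    have e : S * S ^ n = (fun q : G × G => q.1 * q.2) '' (S ×ˢ (S ^ n)) := by
      rw [Set.image_mul_prod]
    rw [e]
    apply Set.InjOn.ncard_image
    rintro ⟨s, x⟩ ⟨hs, hx⟩ ⟨t, y⟩ ⟨ht, hy⟩ hxy
    simp only at hs hx ht hy hxy
    have hst : s = t := by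
      by_contra hst
      obtain ⟨lx, hlx, rfl⟩ := exists_list_of_mem_pow n x hx
      obtain ⟨ly, hly, rfl⟩ := exists_list_of_mem_pow n y hy
      set l1 := ((s :: lx).map fun a => a⁻¹).reverse with hl1
      have m1 : ∀ a ∈ l1, a ∈ S⁻¹ := by
        intro a ha
        simp only [hl1, List.mem_reverse, List.mem_map] at ha
        obtain ⟨b, hb, rfl⟩ := ha
        rcases List.mem_cons.1 hb with rfl | hb
        · simpa using hs
        · simpa using hlx b hb
      have m2 : ∀ a ∈ t :: ly, a ∈ S := by
        intro a ha
        rcases List.mem_cons.1 ha with rfl | ha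
        · exact ht
        · exact hly a ha
      refine hS.prod_ne_one H (l := l1 ++ t :: ly) (by simp) ?_ ?_ ?_
      · intro a ha
        rcases List.mem_append.1 ha with ha | ha
        · right; exact m1 a ha
        · left; exact m2 a ha
      · refine List.isChain_append.2 ⟨chainOf _ hneg _ m1, chainOf _ hpos _ m2, ?_⟩
        intro a ha b hb
        simp [hl1] at ha hb
        subst hb; subst ha
        simpa using hst
      · rw [List.prod_append, hl1, ← List.prod_inv_reverse, List.prod_cons, List.prod_cons, hxy]
        group
    subst hst
    simpa using hxy

end Free

/-! ### The reduced set -/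

/-- The separation length, in units of `L`, used for overlaps of axes. -/
def overlapConst (N : ℕ) : ℕ := 10 ^ 4 * (16 + 2 * N)

/-- The exponent `M` such that `γ = g ^ M` is the long power used in the words. It is even, a
multiple of `N!`, and large compared with `overlapConst N`. -/
def longExp (N : ℕ) : ℕ := N.factorial * (2 * (10 ^ 5 * overlapConst N))

/-- The power of `U` in which the conjugates of the long word live. -/
def wordExp (N : ℕ) : ℕ := 10 * longExp N + 4

section Assembly

variable {G X : Type*} [Group G] [MetricSpace X] [MulAction G X] {δ κ : ℝ} {N : ℕ}

theorem LoxData.pow_low (H : HypAct G X δ) {p : X} {g : G} {L : ℝ} (hg : LoxData p g L) (M : ℕ)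
    (k : ℤ) : |(k : ℝ)| * (len p (g ^ M) - 2 * L) ≤ len p ((g ^ M) ^ k) := by
  have key : ∀ n : ℕ, (n : ℝ) * (len p (g ^ M) - 2 * L) ≤ len p ((g ^ M) ^ n) := by
    intro n
    induction n with
    | zero => simpa using len_nonneg p (1 : G)
    | succ n ih =>
      have h1 := hg.turn (M * n) M
      rw [pow_mul] at h1
      rw [pow_succ, H.len_mul]
      push_cast
      linarith
  obtain ⟨n, rfl | rfl⟩ := k.eq_nat_or_neg
  · simpa using key n
  · rw [zpow_neg, H.len_inv]
    simpa using key n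

theorem HypAct.wordData (H : HypAct G X δ) (A : Acyl G X δ κ N) {p : X} {g : G} {L : ℝ}
    (hg : LoxData p g L) (hL : 10 ^ 4 * δ ≤ L) (hκ : 10 ^ 4 * κ ≤ L) :
    WordData p (g ^ N.factorial) (g ^ longExp N) δ L ((2 * overlapConst N + 4) * L) := by
  have hδ := H.pos
  have hL0 : 0 < L := by linarith
  refine ⟨⟨_, pow_mul g _ _⟩, by linarith, ?_, hg.pow_low H _, by positivity, ?_⟩
  · intro z hz hzl k k'
    have h1 := H.overlap A hg hL hκ hzl (J := overlapConst N) le_rfl hz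
      (longExp N * k) (longExp N * k')
    rwa [zpow_mul, zpow_mul, zpow_natCast] at h1
  · refine le_trans ?_ (hg.low (longExp N))
    have hK : (1 : ℝ) ≤ N.factorial := by exact_mod_cast N.factorial_pos
    have hJ : (10 ^ 4 : ℝ) ≤ overlapConst N := by
      have : 10 ^ 4 ≤ overlapConst N := by unfold overlapConst; omega
      exact_mod_cast this
    have hM : 2 * 10 ^ 5 * (overlapConst N : ℝ) ≤ longExp N := by
      unfold longExp
      push_cast
      nlinarith
    have h2 : (100 * (2 * overlapConst N + 4) + 1000 : ℝ) ≤ longExp N / 100 := by linarith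
    nlinarith

theorem LoxData.not_torsion {p : X} {g : G} {L : ℝ} (hg : LoxData p g L) (hL : 0 < L) {n : ℕ}
    (hn : 0 < n) : ¬ IsOfFinOrder (g ^ n) := by
  intro h
  obtain ⟨m, hm, h1⟩ := isOfFinOrder_iff_pow_eq_one.1 h
  rw [← pow_mul] at h1
  have h2 := hg.low (n * m)
  rw [h1, len_one] at h2
  have : (0 : ℝ) < (n * m : ℕ) := by exact_mod_cast Nat.mul_pos hn hm
  have : 0 < ((n * m : ℕ) : ℝ) * L / 100 := by positivity
  linarith

theorem longWord_conj_mem {U : Set G} (hne : U.Nonempty) (hU : ∀ t ∈ U, t⁻¹ ∈ U) {g b u : G}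
    (hg : g ∈ U ∨ ∃ t ∈ U, ∃ t' ∈ U, g = t * t') (hb : b ∈ U) (hu : u ∈ U) :
    u * longWord (g ^ longExp N) b * u⁻¹ ∈ U ^ wordExp N := by
  set M := longExp N with hM
  have hγ : g ^ M ∈ U ^ (2 * M) := by
    rcases hg with hg | ⟨t, ht, t', ht', rfl⟩
    · obtain ⟨j, hj⟩ : ∃ j, M = 2 * j :=
        ⟨N.factorial * (10 ^ 5 * overlapConst N), by rw [hM]; unfold longExp; ring⟩
      have h1 := pow_subset_pow_add hne hU M j (Set.pow_mem_pow hg (n := M))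
      rwa [← hj, ← two_mul] at h1
    · rw [pow_mul]
      refine Set.pow_mem_pow ?_
      rw [pow_two]
      exact Set.mul_mem_mul ht ht'
  have hγ2 : (g ^ M) ^ 2 ∈ U ^ (4 * M) := by
    have := Set.pow_mem_pow hγ (n := 2)
    rwa [← pow_mul, show 2 * M * 2 = 4 * M by ring] at this
  have e : U ^ wordExp N =
      U * (U ^ (2 * M) * U * U ^ (4 * M) * U * U ^ (4 * M)) * U := by
    rw [wordExp, ← hM]
    simp only [← pow_succ, ← pow_succ', ← pow_add]
    congr 1
    ring
  rw [e, longWord]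
  exact Set.mul_mem_mul (Set.mul_mem_mul hu (Set.mul_mem_mul (Set.mul_mem_mul (Set.mul_mem_mul
    (Set.mul_mem_mul hγ hb) hγ2) (hU b hb)) hγ2)) (hU u hu)

/-- If some `b ∈ U` lies outside the elementary subgroup of the loxodromic element `g`, then
conjugating the long word by representatives of `U` modulo the finite group
`C = C(h) ∩ C(bhb⁻¹)` gives a reduced set. There are at least two representatives, for otherwise
`U²` would be contained in the torsion group `C`, which does not contain `g²`. -/
theorem HypAct.exists_reduced (H : HypAct G X δ) (A : Acyl G X δ κ N) {p : X} {g b : G} {L : ℝ}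
    (hL : 10 ^ 4 * δ ≤ L) (hκ : 10 ^ 4 * κ ≤ L) {U : Set G} (hf : U.Finite)
    (hU : ∀ t ∈ U, t⁻¹ ∈ U) (hle : ∀ t ∈ U, len p t ≤ L) (hg : LoxData p g L)
    (hgU : g ∈ U ∨ ∃ t ∈ U, ∃ t' ∈ U, g = t * t') (hb : b ∈ U)
    (hbE : b ∉ elem (g ^ N.factorial)) :
    ∃ S : Set G, S ⊆ U ^ wordExp N ∧ ReducedAt δ (200 * δ) S p ∧ 2 ≤ S.ncard ∧
      U.ncard ≤ N * S.ncard := by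
  have hδ := H.pos
  have hL0 : 0 < L := by linarith
  have hne : U.Nonempty := ⟨b, hb⟩
  set h := g ^ N.factorial with hh
  set C := Subgroup.centralizer {h, b * h * b⁻¹} with hC
  have hCprop : ∀ x ∈ C, Commute x h ∧ IsOfFinOrder x := by
    intro x hx
    rw [hC, Subgroup.mem_centralizer_iff] at hx
    have h1 : h * x = x * h := hx h (by simp)
    have h2 := hx (b * h * b⁻¹) (by simp)
    have h3 : Commute x h := h1.symm
    refine ⟨h3, H.conj_torsion A hg hL hκ ((hle b hb).trans (by linarith)) hbE h3 ?_⟩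
    rw [← hh]
    have h4 : b⁻¹ * (x * (b * h * b⁻¹)) * b = b⁻¹ * ((b * h * b⁻¹) * x) * b := by rw [h2]
    calc b⁻¹ * x * b * h = b⁻¹ * (x * (b * h * b⁻¹)) * b := by group
      _ = b⁻¹ * ((b * h * b⁻¹) * x) * b := h4
      _ = h * (b⁻¹ * x * b) := by group
  have hhL := hg.pow hL0.le (K := N.factorial) N.factorial_pos
  have hK : (0 : ℝ) < N.factorial := by exact_mod_cast N.factorial_pos
  obtain ⟨hCf, hCN⟩ := H.torsion_card A hhL (by positivity) (C := (C : Set G)) hCprop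
  obtain ⟨R, hRU, hR⟩ := Set.exists_subset_bijOn U (QuotientGroup.mk : G → G ⧸ C)
  have hRC : ∀ u ∈ R, ∀ u' ∈ R, u ≠ u' → u⁻¹ * u' ∉ C := by
    intro u hu u' hu' hne hmem
    exact hne (hR.injOn hu hu' (QuotientGroup.eq.2 hmem))
  have hrep : ∀ u ∈ U, ∃ r ∈ R, r⁻¹ * u ∈ C := by
    intro u hu
    obtain ⟨r, hr, hru⟩ := hR.surjOn ⟨u, hu, rfl⟩
    exact ⟨r, hr, QuotientGroup.eq.1 hru⟩
  have hRf : R.Finite := hf.subset hRU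
  obtain ⟨hred, hinj⟩ := H.reduced_conj (H.wordData A hg hL hκ) hbE (hle b hb)
    (fun u hu => hle u (hRU hu)) hRC
  refine ⟨_, ?_, hred, ?_, ?_⟩
  · rintro _ ⟨u, hu, rfl⟩
    exact longWord_conj_mem hne hU hgU hb (hRU hu)
  · rw [hinj.ncard_image]
    by_contra! hlt
    have hsub : ∀ x ∈ R, ∀ y ∈ R, x = y := by
      intro x hx y hy
      exact (Set.ncard_le_one_iff hRf).1 (by omega) hx hy
    have hUU : ∀ u ∈ U, ∀ v ∈ U, u * v ∈ C := by
      intro u hu v hv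
      obtain ⟨r, hr, h1⟩ := hrep _ (hU u hu)
      obtain ⟨r', hr', h2⟩ := hrep v hv
      rw [hsub r' hr' r hr] at h2
      have := C.mul_mem (C.inv_mem h1) h2
      have e : (r⁻¹ * u⁻¹)⁻¹ * (r⁻¹ * v) = u * v := by group
      rwa [e] at this
    have hg2 : g ^ 2 ∈ C := by
      rcases hgU with hgU | ⟨t, ht, t', ht', rfl⟩
      · rw [pow_two]; exact hUU g hgU g hgU
      · exact C.pow_mem (hUU t ht t' ht') 2
    exact hg.not_torsion hL0 two_pos (hCprop _ hg2).2
  · rw [hinj.ncard_image]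
    have hsub : U ⊆ (fun q : G × G => q.1 * q.2) '' (R ×ˢ (C : Set G)) := by
      intro u hu
      obtain ⟨r, hr, h1⟩ := hrep u hu
      exact ⟨(r, r⁻¹ * u), ⟨hr, h1⟩, by simp⟩
    have hfin := hRf.prod hCf
    calc U.ncard ≤ _ := Set.ncard_le_ncard hsub (hfin.image _)
      _ ≤ (R ×ˢ (C : Set G)).ncard := Set.ncard_image_le hfin
      _ = R.ncard * (C : Set G).ncard := Set.ncard_prod
      _ ≤ R.ncard * N := Nat.mul_le_mul_left _ hCN
      _ = N * R.ncard := mul_comm _ _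

/-- A base point almost minimising the energy, together with the extremal displacements. -/
theorem exists_base [Nonempty X] {U : Set G} (hf : U.Finite) (hne : U.Nonempty) (hδ : 0 < δ) :
    ∃ (p : X) (s : G), s ∈ U ∧ energy X U ≤ len p s ∧ (∀ t ∈ U, len p t ≤ len p s) ∧
      ∀ m : X, ∃ t ∈ U, len p s - δ < dist (t • m) m := by
  have attained : ∀ m : X, ∃ t ∈ U, energyAt U m = dist (t • m) m := by
    intro m
    obtain ⟨t, ht, h1⟩ := (hne.image fun u : G => dist (u • m) m).csSup_mem (hf.image _)
    exact ⟨t, ht, h1.symm⟩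
  have hbdd : BddBelow (Set.range fun x : X => energyAt U x) := by
    refine ⟨0, ?_⟩
    rintro _ ⟨x, rfl⟩
    obtain ⟨t, _, h1⟩ := attained x
    simp only [h1]
    exact dist_nonneg
  have hle : ∀ m : X, energy X U ≤ energyAt U m := fun m => csInf_le hbdd ⟨m, rfl⟩
  obtain ⟨_, ⟨p, rfl⟩, hp⟩ := exists_lt_of_csInf_lt
    (Set.range_nonempty fun x : X => energyAt U x) (lt_add_of_pos_right (energy X U) hδ)
  obtain ⟨s, hs, h1⟩ := attained p
  have h2 : energyAt U p = len p s := h1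
  refine ⟨p, s, hs, h2 ▸ hle p, ?_, ?_⟩
  · intro t ht
    rw [← h2]
    exact le_csSup (hf.image _).bddAbove ⟨t, ht, rfl⟩
  · intro m
    obtain ⟨t, ht, h3⟩ := attained m
    refine ⟨t, ht, ?_⟩
    have := hle m
    simp only at hp
    linarith

theorem log_growth_bound {U S : Set G} {c₀ N : ℕ} (hf : U.Finite) (hne : U.Nonempty)
    (hc : 0 < c₀) (h2 : 2 ≤ S.ncard) (hUS : U.ncard ≤ N * S.ncard)
    (hgr : Real.log S.ncard / c₀ ≤ growthRate U) :
    Real.log (U.ncard : ℝ) / (2 * ((c₀ * (N + 1) : ℕ) : ℝ)) ≤ growthRate U := by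
  refine le_trans ?_ hgr
  have hc' : (0 : ℝ) < c₀ := by exact_mod_cast hc
  have hU : 0 < U.ncard := (Set.ncard_pos hf).2 hne
  have h3 : U.ncard ≤ S.ncard ^ (N + 1) := by
    have : N ≤ S.ncard ^ N :=
      (Nat.lt_two_pow_self (n := N)).le.trans (Nat.pow_le_pow_left h2 N)
    rw [pow_succ]
    exact hUS.trans (Nat.mul_le_mul_right _ this)
  have h4 : Real.log U.ncard ≤ (N + 1) * Real.log S.ncard := by
    have := Real.log_le_log (by exact_mod_cast hU)
      (by exact_mod_cast h3 : (U.ncard : ℝ) ≤ (S.ncard : ℝ) ^ (N + 1))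
    rw [Real.log_pow] at this
    exact_mod_cast this
  have h5 : 0 ≤ Real.log S.ncard := Real.log_natCast_nonneg _
  have hN : (0 : ℝ) ≤ N := Nat.cast_nonneg N
  rw [div_le_div_iff₀ (by positivity) hc']
  push_cast
  have h6 : 0 ≤ (N + 1) * Real.log S.ncard := by positivity
  nlinarith

end Assembly

/-- growth trichotomy for acylindrical actions. -/
theorem growth_trichotomy :
    ∀ N : ℝ, 0 < N → ∃ c : ℕ, 1 < c ∧
      ∀ (G : Type u) [Group G] (X : Type v) [MetricSpace X] [MulAction G X],
      ∀ δ κ : ℝ, 0 < δ → 0 < κ →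
        IsDeltaHyperbolic X δ → IsGeodesicSpace X →
        IsometricAction G X → AcylindricalAction G X δ κ N →
        ∀ U : Set G, U.Finite → U.Nonempty → U⁻¹ = U →
          energy X U ≤ 10 ^ 4 * max κ δ ∨
          (VirtuallyCyclic (Subgroup.closure U) ∧
            ∃ g ∈ Subgroup.closure U, IsLoxodromic X g) ∨
          ∃ (p : X) (S : Set G), S ⊆ U ^ c ∧ ReducedAt δ (200 * δ) S p ∧
            max 2 ((U.ncard : ℝ) / (c : ℝ)) ≤ (S.ncard : ℝ) ∧
            Real.log (U.ncard : ℝ) / (2 * (c : ℝ)) ≤ growthRate U := by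
  intro N' _
  set N := ⌊N'⌋₊ with hN
  have hc₀ : 1 < wordExp N := by unfold wordExp; omega
  refine ⟨wordExp N * (N + 1), by nlinarith, ?_⟩
  intro G _ X _ _ δ κ hδ hκ hhyp hgeod hisom hacyl U hf hne hsymm
  have hU : ∀ t ∈ U, t⁻¹ ∈ U := fun t ht => by rw [← hsymm]; simpa using ht
  have H : HypAct G X δ := ⟨hδ, hhyp, hgeod, hisom⟩
  have A : Acyl G X δ κ N :=
    ⟨hκ, fun x y h => (hacyl x y h).1, fun x y h => Nat.le_floor (hacyl x y h).2⟩
  by_cases hE : energy X U ≤ 10 ^ 4 * max κ δ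
  · exact Or.inl hE
  right
  have hX : Nonempty X := by
    by_contra hX
    rw [not_nonempty_iff] at hX
    apply hE
    have : energy X U = 0 := by unfold energy; rw [Set.range_eq_empty, Real.sInf_empty]
    rw [this]
    positivity
  obtain ⟨p, s, hs, hEs, hle, hmin⟩ := exists_base (X := X) hf hne hδ
  have hm1 := le_max_left κ δ
  have hm2 := le_max_right κ δ
  have hL : 10 ^ 4 * δ ≤ len p s := by linarith
  have hLκ : 10 ^ 4 * κ ≤ len p s := by linarith
  have hL0 : 0 < len p s := by linarith
  obtain ⟨g, hgU, hg⟩ := H.exists_lox hL hU hs rfl hle hmin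
  by_cases hUE : U ⊆ elem (g ^ N.factorial)
  · left
    have hgc : g ∈ Subgroup.closure U := by
      rcases hgU with hgU | ⟨t, ht, t', ht', rfl⟩
      · exact Subgroup.subset_closure hgU
      · exact mul_mem (Subgroup.subset_closure ht) (Subgroup.subset_closure ht')
    have hK : (1 : ℝ) ≤ N.factorial := by exact_mod_cast N.factorial_pos
    refine ⟨H.virtuallyCyclic A (hg.pow hL0.le N.factorial_pos) ?_ _
      ((Subgroup.closure_le _).2 hUE) (pow_mem hgc _), g, hgc, H.isLoxodromic hg hL0⟩
    nlinarith
  · right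
    obtain ⟨b, hb, hbE⟩ := Set.not_subset.1 hUE
    obtain ⟨S, hSU, hS, h2, hUS⟩ := H.exists_reduced A hL hLκ hf hU hle hg hgU hb hbE
    refine ⟨p, S, ?_, hS, max_le (by exact_mod_cast h2) ?_, ?_⟩
    · have h3 := pow_subset_pow_add hne hU (wordExp N) ((5 * longExp N + 2) * N)
      rw [show wordExp N + 2 * ((5 * longExp N + 2) * N) = wordExp N * (N + 1) by
        unfold wordExp; ring] at h3
      exact hSU.trans h3
    · rw [div_le_iff₀ (by positivity)]
      have h3 : U.ncard ≤ S.ncard * (wordExp N * (N + 1)) := by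
        have h4 : N ≤ wordExp N * (N + 1) := by nlinarith
        calc U.ncard ≤ N * S.ncard := hUS
          _ ≤ wordExp N * (N + 1) * S.ncard := Nat.mul_le_mul_right _ h4
          _ = _ := mul_comm _ _
      exact_mod_cast h3
    · exact log_growth_bound hf hne (by omega) h2 hUS
        (growthRate_ge hf hne (by omega) hSU (hS.ncard_pow H))
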